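/- arXiv:1301.4321 — 10 statements merged into one kernel-verified Lean document; each statement's English description precedes it below -/
import Mathlib

section
/- For every n ∈ ℕ, all real numbers a_1, …, a_n and b_1, …, b_n, and every λ ∈ ℝ, one has λ² + Σ_{i=1}^n (a_i − λ b_i)² ≥ (Σ_{i=1}^n a_i²) / (1 + Σ_{i=1}^n b_i²). -/
/-- For every `n`, all reals `a₁,…,aₙ`, `b₁,…,bₙ` and every `l ∈ ℝ`,
`l² + Σ (aᵢ - l bᵢ)² ≥ (Σ aᵢ²) / (1 + Σ bᵢ²)`. -/
theorem stmt1 (n : ℕ) (a b : Fin n → ℝ) (l : ℝ) :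
    (∑ i, (a i) ^ 2) / (1 + ∑ i, (b i) ^ 2)
      ≤ l ^ 2 + ∑ i, (a i - l * b i) ^ 2 := by
  have hCS := Finset.sum_mul_sq_le_sq_mul_sq Finset.univ a b
  have hexp : ∑ i, (a i - l * b i) ^ 2
      = ∑ i, (a i) ^ 2 - 2 * l * ∑ i, a i * b i + l ^ 2 * ∑ i, (b i) ^ 2 := by
    rw [Finset.mul_sum, Finset.mul_sum, ← Finset.sum_sub_distrib, ← Finset.sum_add_distrib]
    exact Finset.sum_congr rfl fun i _ => by ring
  have hB : 0 ≤ ∑ i, (b i) ^ 2 := Finset.sum_nonneg fun i _ => sq_nonneg _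
  rw [hexp, div_le_iff₀ (by linarith)]
  -- With `A = Σ aᵢ²`, `B = Σ bᵢ²`, `C = Σ aᵢ bᵢ`, the difference of the two sides is
  -- `(l (1 + B) - C)² + (A B - C²)`, whose second summand is nonnegative by Cauchy-Schwarz.
  linarith [sq_nonneg (l * (1 + ∑ i, (b i) ^ 2) - ∑ i, a i * b i)]
end

section
/- Let f : ℝ^d → ℝ satisfy 0 ≤ f(t) ≤ 1/(1 + ‖t‖_∞^{d+1}) for all t ∈ ℝ^d. Let (v_i)_{i ∈ ℕ*} be pairwise distinct elements of ℤ^d, let x_i ∈ [−1,1]^d for each i, and let ε ∈ (−1/2, 1/2). Then for every i ∈ ℕ*, the sum Σ_{j ∈ ℕ*, j ≠ i} f(v_i − v_j + ε(x_i − x_j)) is at most 2^d · d · Σ_{j ∈ ℕ} (j + 3/2)^{d−1} / (1 + j^{d+1}). -/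
/-!
The points `vᵢ - vⱼ`, `j ≠ i`, are pairwise distinct and nonzero in `ℤ^d`; they are grouped
according to their sup norm `n + 1`, `n ∈ ℕ`. The perturbation `ε (xᵢ - xⱼ)` has sup norm at
most `1`, so each term of the group `n` is at most `1 / (1 + n ^ (d + 1))`. The group has at most
`(2n + 3) ^ d - (2n + 1) ^ d ≤ 2 d (2n + 3) ^ (d - 1) = 2 ^ d d (n + 3/2) ^ (d - 1)` elements
(`card_shell_le`), and summing over `n` gives the bound. The series on the right converges by
comparison with `∑ 1 / n ^ 2`, so its partial sums are bounded by its sum.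
-/

/-- The sup norm of an integer vector, as a natural number. -/
def supNatAbs {d : ℕ} (w : Fin d → ℤ) : ℕ := Finset.univ.sup fun k => (w k).natAbs

lemma supNatAbs_le_iff {d : ℕ} (w : Fin d → ℤ) (n : ℕ) :
    supNatAbs w ≤ n ↔ w ∈ Finset.Icc (fun _ => -(n : ℤ)) (fun _ => (n : ℤ)) := by
  simp only [supNatAbs, Finset.sup_le_iff, Finset.mem_univ, true_implies, Finset.mem_Icc,
    Pi.le_def]
  constructor
  · intro h
    exact ⟨fun k => by have := h k; omega, fun k => by have := h k; omega⟩
  · rintro ⟨h1, h2⟩ k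
    have := h1 k
    have := h2 k
    omega

lemma supNatAbs_pos {d : ℕ} {w : Fin d → ℤ} (hw : w ≠ 0) : 1 ≤ supNatAbs w := by
  obtain ⟨k, hk⟩ := Function.ne_iff.mp hw
  have : (w k).natAbs ≤ supNatAbs w :=
    Finset.le_sup (f := fun k => (w k).natAbs) (Finset.mem_univ k)
  simp only [Pi.zero_apply] at hk
  omega

lemma card_cube (d n : ℕ) :
    (Finset.Icc (fun _ : Fin d => -(n : ℤ)) (fun _ => (n : ℤ))).card = (2 * n + 1) ^ d := by
  rw [Pi.card_Icc]
  simp only [Int.card_Icc, Finset.prod_const, Finset.card_univ, Fintype.card_fin]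
  congr 1
  omega

lemma add_two_pow_succ_le (a e : ℕ) :
    (a + 2) ^ (e + 1) ≤ a ^ (e + 1) + 2 * (e + 1) * (a + 2) ^ e := by
  induction e with
  | zero => simp
  | succ e ih =>
    have h : a ^ (e + 1) ≤ (a + 2) ^ (e + 1) := Nat.pow_le_pow_left (by omega) _
    calc (a + 2) ^ (e + 1 + 1) = (a + 2) * (a + 2) ^ (e + 1) := by ring
      _ ≤ (a + 2) * (a ^ (e + 1) + 2 * (e + 1) * (a + 2) ^ e) := Nat.mul_le_mul_left _ ih
      _ = a ^ (e + 1 + 1) + 2 * a ^ (e + 1) + 2 * (e + 1) * (a + 2) ^ (e + 1) := by ring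
      _ ≤ a ^ (e + 1 + 1) + 2 * (a + 2) ^ (e + 1) + 2 * (e + 1) * (a + 2) ^ (e + 1) := by omega
      _ = _ := by ring

/-- A finite set of integer vectors of sup norm `n + 1` lies in a cube with `(2n + 3) ^ d` points
from which a concentric cube with `(2n + 1) ^ d` points is removed. -/
lemma card_shell_le (d : ℕ) (hd : 1 ≤ d) (n : ℕ) (A : Finset (Fin d → ℤ))
    (hA : ∀ w ∈ A, supNatAbs w = n + 1) :
    (A.card : ℝ) ≤ 2 ^ d * d * ((n : ℝ) + 3 / 2) ^ (d - 1) := by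
  obtain ⟨e, rfl⟩ : ∃ e, d = e + 1 := ⟨d - 1, by omega⟩
  set Q : ℕ → Finset (Fin (e + 1) → ℤ) :=
    fun m => Finset.Icc (fun _ => -(m : ℤ)) (fun _ => (m : ℤ)) with hQ
  have hdisj : Disjoint A (Q n) := by
    rw [Finset.disjoint_left]
    intro w hw hw'
    have := (supNatAbs_le_iff w n).mpr hw'
    have := hA w hw
    omega
  have hsub : A ∪ Q n ⊆ Q (n + 1) := by
    intro w hw
    refine (supNatAbs_le_iff w (n + 1)).mp ?_
    rcases Finset.mem_union.mp hw with hw | hw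
    · exact (hA w hw).le
    · have := (supNatAbs_le_iff w n).mpr hw
      omega
  have h := Finset.card_le_card hsub
  rw [Finset.card_union_of_disjoint hdisj, card_cube, card_cube] at h
  have h2 := add_two_pow_succ_le (2 * n + 1) e
  have h3 : A.card ≤ 2 * (e + 1) * (2 * n + 3) ^ e := by
    have : 2 * (n + 1) + 1 = 2 * n + 1 + 2 := by ring
    rw [this] at h
    have h4 : 2 * n + 1 + 2 = 2 * n + 3 := by ring
    rw [h4] at h h2
    omega
  calc (A.card : ℝ) ≤ ((2 * (e + 1) * (2 * n + 3) ^ e : ℕ) : ℝ) := by exact_mod_cast h3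
    _ = 2 * (e + 1) * (2 * ((n : ℝ) + 3 / 2)) ^ e := by push_cast; ring
    _ = _ := by
      rw [mul_pow]; push_cast; ring

lemma summable_bound (d : ℕ) (hd : 1 ≤ d) :
    Summable fun j : ℕ => ((j : ℝ) + 3 / 2) ^ (d - 1) / (1 + (j : ℝ) ^ (d + 1)) := by
  obtain ⟨e, rfl⟩ : ∃ e, d = e + 1 := ⟨d - 1, by omega⟩
  rw [← summable_nat_add_iff 1]
  have h2 : Summable fun j : ℕ => (5 / 2 : ℝ) ^ e * (1 / ((j + 1 : ℕ) : ℝ) ^ 2) :=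
    ((summable_nat_add_iff 1).mpr
      (Real.summable_one_div_nat_pow.mpr (by norm_num : 1 < 2))).mul_left _
  refine Summable.of_nonneg_of_le (fun j => by positivity) (fun j => ?_) h2
  have hm : (1 : ℝ) ≤ ((j + 1 : ℕ) : ℝ) := by push_cast; linarith [j.cast_nonneg (α := ℝ)]
  generalize ((j + 1 : ℕ) : ℝ) = m at hm
  have hm0 : 0 < m := by linarith
  simp only [Nat.add_sub_cancel]
  calc (m + 3 / 2) ^ e / (1 + m ^ (e + 1 + 1))
      ≤ (5 / 2 * m) ^ e / m ^ (e + 1 + 1) := by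
        gcongr <;> linarith
    _ = (5 / 2 : ℝ) ^ e * (1 / m ^ 2) := by
        rw [mul_pow]; field_simp; ring

/-- A perturbation of sup norm at most `1` lowers the sup norm by at most `1`. -/
lemma supNatAbs_sub_one_le_norm {d : ℕ} (hd : 1 ≤ d) (w : Fin d → ℤ) (t : Fin d → ℝ)
    (ht : ∀ k, |t k - w k| ≤ 1) : (supNatAbs w : ℝ) - 1 ≤ ‖t‖ := by
  have : Nonempty (Fin d) := ⟨⟨0, hd⟩⟩
  obtain ⟨k, -, hk⟩ := Finset.exists_mem_eq_sup Finset.univ Finset.univ_nonempty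
    (fun k => (w k).natAbs)
  have h1 : |t k| ≤ ‖t‖ := norm_le_pi_norm t k
  have h2 : (supNatAbs w : ℝ) = |(w k : ℝ)| := by
    rw [supNatAbs, hk, Nat.cast_natAbs, Int.cast_abs]
  have h3 := abs_sub_abs_le_abs_sub (w k : ℝ) (t k)
  rw [abs_sub_comm] at h3
  linarith [ht k]

/-- Lemma D.1 of the paper: if `0 ≤ f(t) ≤ 1/(1+‖t‖_∞^(d+1))`, the points `vᵢ` are
pairwise distinct in `ℤ^d`, `xᵢ ∈ [-1,1]^d` and `ε ∈ (-1/2,1/2)`, then for every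
`i`, `Σ_{j ≠ i} f(vᵢ - vⱼ + ε(xᵢ - xⱼ)) ≤ 2^d d Σ_{j∈ℕ} (j+3/2)^(d-1)/(1+j^(d+1))`. -/
theorem stmt2 (d : ℕ) (hd : 1 ≤ d) (f : (Fin d → ℝ) → ℝ)
    (hf0 : ∀ t, 0 ≤ f t) (hf : ∀ t, f t ≤ 1 / (1 + ‖t‖ ^ (d + 1)))
    (v : ℕ → Fin d → ℤ) (hv : Function.Injective v)
    (x : ℕ → Fin d → ℝ) (hx : ∀ i k, x i k ∈ Set.Icc (-1 : ℝ) 1)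
    (ε : ℝ) (hε : ε ∈ Set.Ioo (-(1/2) : ℝ) (1/2)) (i : ℕ) :
    (∑' j : {j : ℕ // j ≠ i},
        f (fun k => ((v i k : ℝ) - (v (j : ℕ) k : ℝ)) + ε * (x i k - x (j : ℕ) k)))
      ≤ 2 ^ d * d * ∑' j : ℕ, ((j : ℝ) + 3 / 2) ^ (d - 1) / (1 + (j : ℝ) ^ (d + 1)) := by
  have hwinj : Function.Injective fun j : {j : ℕ // j ≠ i} => v i - v j := fun a b hab =>
    Subtype.ext (hv (sub_right_injective hab))
  set h : {j : ℕ // j ≠ i} → ℕ := fun j => supNatAbs (v i - v j) - 1 with hh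
  have hpos : ∀ j : {j : ℕ // j ≠ i}, supNatAbs (v i - v j) = h j + 1 := fun j => by
    have := supNatAbs_pos (w := v i - v j) (sub_ne_zero.mpr fun e => j.2 (hv e).symm)
    simp only [hh]
    omega
  have hterm : ∀ j : {j : ℕ // j ≠ i},
      f (fun k => ((v i k : ℝ) - (v (j : ℕ) k : ℝ)) + ε * (x i k - x (j : ℕ) k))
        ≤ 1 / (1 + (h j : ℝ) ^ (d + 1)) := by
    intro j
    refine (hf _).trans ?_
    have hn := supNatAbs_sub_one_le_norm hd (v i - v j)
      (fun k => ((v i k : ℝ) - (v (j : ℕ) k : ℝ)) + ε * (x i k - x (j : ℕ) k)) (fun k => by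
        have h1 : |ε| ≤ 1 / 2 := abs_le.mpr ⟨hε.1.le, hε.2.le⟩
        have h2 : |x i k - x j k| ≤ 2 := abs_le.mpr
          ⟨by linarith [(hx i k).1, (hx j k).2], by linarith [(hx i k).2, (hx j k).1]⟩
        simp only [Pi.sub_apply, Int.cast_sub, add_sub_cancel_left, abs_mul]
        nlinarith [abs_nonneg ε, abs_nonneg (x i k - x j k)])
    rw [hpos j] at hn
    push_cast at hn
    rw [add_sub_cancel_right] at hn
    gcongr
  have hS := summable_bound d hd
  rw [← tsum_mul_left]
  have hS' := hS.mul_left (2 ^ d * d : ℝ)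
  refine Real.tsum_le_of_sum_le (fun j => hf0 _) fun s => ?_
  calc _ ≤ ∑ j ∈ s, 1 / (1 + (h j : ℝ) ^ (d + 1)) := Finset.sum_le_sum fun j _ => hterm j
    _ = ∑ n ∈ s.image h, ({j ∈ s | h j = n}.card) • (1 / (1 + (n : ℝ) ^ (d + 1))) :=
        Finset.sum_comp (fun n : ℕ => 1 / (1 + (n : ℝ) ^ (d + 1))) h
    _ ≤ ∑ n ∈ s.image h,
          2 ^ d * d * (((n : ℝ) + 3 / 2) ^ (d - 1) / (1 + (n : ℝ) ^ (d + 1))) := by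
        refine Finset.sum_le_sum fun n _ => ?_
        have hc := card_shell_le d hd n
          ({j ∈ s | h j = n}.image fun j : {j : ℕ // j ≠ i} => v i - v j) (by
            intro w hw
            obtain ⟨j, hj, rfl⟩ := Finset.mem_image.mp hw
            rw [hpos j, (Finset.mem_filter.mp hj).2])
        rw [Finset.card_image_of_injective _ hwinj] at hc
        rw [nsmul_eq_mul, mul_one_div, ← mul_div_assoc]
        gcongr
    _ ≤ _ := hS'.sum_le_tsum _ fun n _ => by positivity
end

section
/- Let f : ℝ^d → ℝ satisfy 0 ≤ f(t) ≤ 1/(1 + ‖t‖_∞^{d+1}) for all t ∈ ℝ^d. Let (v_i)_{i ∈ ℕ*} be pairwise distinct elements of ℤ^d, let x_i ∈ [−1,1]^d for each i, and let ε ∈ (−1/2, 1/2). Then for every i ∈ ℕ* and every N ∈ ℕ*, the sum Σ_{j ∈ ℕ*, ‖v_i − v_j‖_∞ ≥ N} f(v_i − v_j + ε(x_i − x_j)) is at most 2^d · d · Σ_{j ∈ ℕ, j ≥ N−1} (j + 3/2)^{d−1} / (1 + j^{d+1}). -/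
/-!
The differences `w = vᵢ - vⱼ` are pairwise distinct integer vectors, so they can be grouped
according to `m = ‖w‖_∞ ≥ N`. At most `(2m+1)^d - (2m-1)^d ≤ 2d (2m+1)^(d-1)` integer vectors lie
on the sup-norm sphere of radius `m` (`card_fiber_le`). The perturbation `ε (xᵢ - xⱼ)` has sup norm
at most `1`, so each of them contributes at most `1 / (1 + (m-1)^(d+1))` (`perturbed_norm_ge`).
With `n = m - 1` the product of the two bounds is exactly `2^d d` times the `n`-th term on the
right. The right-hand series converges by comparison with `∑ 1/n²` (`summable_rhs`), so every
finite partial sum of the left side is at most the right side.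
-/

/-- The sup norm of an integer vector, as a natural number. -/
def intSup {d : ℕ} (w : Fin d → ℤ) : ℕ := Finset.univ.sup fun k => (w k).natAbs

lemma intSup_le_iff {d : ℕ} (w : Fin d → ℤ) (m : ℕ) :
    intSup w ≤ m ↔ ∀ k, (w k).natAbs ≤ m := by
  simp [intSup]

lemma norm_eq_intSup {d : ℕ} (w : Fin d → ℤ) : ‖fun k => (w k : ℝ)‖ = intSup w := by
  have key (k : Fin d) : ‖(w k : ℝ)‖ = ((w k).natAbs : ℝ) := by
    rw [Real.norm_eq_abs, Nat.cast_natAbs, Int.cast_abs]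
  apply le_antisymm
  · refine (pi_norm_le_iff_of_nonneg (Nat.cast_nonneg _)).2 fun k => ?_
    rw [key]
    exact_mod_cast (intSup_le_iff w _).1 le_rfl k
  · have h : intSup w ≤ ⌊‖fun k => (w k : ℝ)‖⌋₊ := by
      refine (intSup_le_iff w _).2 fun k => Nat.le_floor ?_
      rw [← key]
      exact norm_le_pi_norm (fun k => (w k : ℝ)) k
    exact (Nat.le_floor_iff (norm_nonneg _)).1 h

lemma card_box (d m : ℕ) :
    (Fintype.piFinset fun _ : Fin d => Finset.Icc (-(m : ℤ)) m).card = (2 * m + 1) ^ d := by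
  rw [Fintype.card_piFinset_const, Int.card_Icc]
  congr 1
  omega

/-- A finite set of integer vectors of sup norm `n + 1` lies in the difference of the cubes of
radii `n + 1` and `n`, whose cardinality is estimated by the mean value inequality for `t ↦ t^d`. -/
lemma card_fiber_le {d : ℕ} (hd : 1 ≤ d) (n : ℕ) (T : Finset (Fin d → ℤ))
    (hT : ∀ w ∈ T, intSup w = n + 1) :
    (T.card : ℝ) ≤ 2 ^ d * d * ((n : ℝ) + 3 / 2) ^ (d - 1) := by
  classical
  set B : ℕ → Finset (Fin d → ℤ) :=
    fun m => Fintype.piFinset fun _ : Fin d => Finset.Icc (-(m : ℤ)) m with hB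
  have mem (m : ℕ) (w : Fin d → ℤ) : w ∈ B m ↔ intSup w ≤ m := by
    rw [intSup_le_iff]
    simp only [hB, Fintype.mem_piFinset, Finset.mem_Icc]
    exact forall_congr' fun k => by omega
  have hdisj : Disjoint T (B n) := Finset.disjoint_left.2 fun w hw hw' => by
    have := hT w hw
    have := (mem n w).1 hw'
    omega
  have hsub : T ∪ B n ⊆ B (n + 1) := by
    refine Finset.union_subset (fun w hw => (mem _ w).2 (hT w hw).le) fun w hw => (mem _ w).2 ?_
    exact ((mem _ w).1 hw).trans n.le_succ
  have hc := Finset.card_le_card hsub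
  rw [Finset.card_union_of_disjoint hdisj, card_box, card_box] at hc
  have hc' : (T.card : ℝ) + (2 * n + 1) ^ d ≤ (2 * (n + 1) + 1) ^ d := by exact_mod_cast hc
  have hmv := abs_pow_sub_pow_le (2 * ((n : ℝ) + 1) + 1) (2 * n + 1) d
  have h2 : |2 * ((n : ℝ) + 1) + 1 - (2 * n + 1)| = 2 := by
    rw [show 2 * ((n : ℝ) + 1) + 1 - (2 * n + 1) = 2 by ring]; norm_num
  have h3 : max |2 * ((n : ℝ) + 1) + 1| |2 * (n : ℝ) + 1| = 2 * (n + 3 / 2) := by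
    rw [abs_of_nonneg (by positivity), abs_of_nonneg (by positivity), max_eq_left (by linarith)]
    ring
  rw [h2, h3, mul_pow] at hmv
  have h4 : (2 : ℝ) ^ d = 2 * 2 ^ (d - 1) := by
    rw [← pow_succ', Nat.sub_add_cancel hd]
  rw [h4]
  have := (le_abs_self _).trans hmv
  linarith

lemma perturbed_norm_ge {d : ℕ} (w y z : Fin d → ℝ) (hy : ∀ k, y k ∈ Set.Icc (-1 : ℝ) 1)
    (hz : ∀ k, z k ∈ Set.Icc (-1 : ℝ) 1) (ε : ℝ) (hε : ε ∈ Set.Ioo (-(1/2) : ℝ) (1/2)) :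
    ‖w‖ - 1 ≤ ‖fun k => w k + ε * (y k - z k)‖ := by
  have h1 : ‖fun k => ε * (y k - z k)‖ ≤ 1 := by
    refine (pi_norm_le_iff_of_nonneg zero_le_one).2 fun k => ?_
    have ha : |ε| ≤ 1 / 2 := abs_le.2 ⟨hε.1.le, hε.2.le⟩
    have hb : |y k - z k| ≤ 2 := by
      obtain ⟨h1, h2⟩ := hy k
      obtain ⟨h3, h4⟩ := hz k
      exact abs_le.2 ⟨by linarith, by linarith⟩
    rw [Real.norm_eq_abs, abs_mul]
    nlinarith [abs_nonneg ε, abs_nonneg (y k - z k)]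
  have h2 := norm_sub_le (fun k => w k + ε * (y k - z k)) (fun k => ε * (y k - z k))
  have h3 : ((fun k => w k + ε * (y k - z k)) - fun k => ε * (y k - z k)) = w := by
    ext k; simp
  rw [h3] at h2
  linarith

lemma summable_rhs {d : ℕ} (hd : 1 ≤ d) :
    Summable fun n : ℕ => ((n : ℝ) + 3 / 2) ^ (d - 1) / (1 + (n : ℝ) ^ (d + 1)) := by
  rw [← summable_nat_add_iff 1]
  have hs : Summable fun n : ℕ => (5 / 2 : ℝ) ^ (d - 1) * (1 / ((n + 1 : ℕ) : ℝ) ^ 2) :=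
    ((summable_nat_add_iff 1).2 (Real.summable_one_div_nat_pow.2 one_lt_two)).mul_left _
  refine Summable.of_nonneg_of_le (fun n => by positivity) (fun n => ?_) hs
  have ht : (1 : ℝ) ≤ ((n + 1 : ℕ) : ℝ) := by exact_mod_cast Nat.succ_pos n
  generalize ((n + 1 : ℕ) : ℝ) = t at ht
  have ht0 : 0 < t := by linarith
  have h1 : (t + 3 / 2) ^ (d - 1) ≤ (5 / 2 : ℝ) ^ (d - 1) * t ^ (d - 1) := by
    rw [← mul_pow]
    exact pow_le_pow_left₀ (by linarith) (by linarith) _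
  have h2 : t ^ (d + 1) = t ^ (d - 1) * t ^ 2 := by
    rw [← pow_add]; congr 1; omega
  rw [mul_one_div, div_le_div_iff₀ (by positivity) (by positivity), h2]
  calc (t + 3 / 2) ^ (d - 1) * t ^ 2
      ≤ (5 / 2 : ℝ) ^ (d - 1) * t ^ (d - 1) * t ^ 2 := by gcongr
    _ = (5 / 2 : ℝ) ^ (d - 1) * (t ^ (d - 1) * t ^ 2) := by ring
    _ ≤ (5 / 2 : ℝ) ^ (d - 1) * (1 + t ^ (d - 1) * t ^ 2) := by gcongr; linarith

/-- Lemma D.3 of the paper: under the same hypotheses as Lemma D.1, for every `i` and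
every `N ∈ ℕ*`, `Σ_{j, ‖vᵢ - vⱼ‖_∞ ≥ N} f(vᵢ - vⱼ + ε(xᵢ - xⱼ))
  ≤ 2^d d Σ_{j ≥ N-1} (j+3/2)^(d-1)/(1+j^(d+1))`. -/
theorem stmt4 (d : ℕ) (hd : 1 ≤ d) (f : (Fin d → ℝ) → ℝ)
    (hf0 : ∀ t, 0 ≤ f t) (hf : ∀ t, f t ≤ 1 / (1 + ‖t‖ ^ (d + 1)))
    (v : ℕ → Fin d → ℤ) (hv : Function.Injective v)
    (x : ℕ → Fin d → ℝ) (hx : ∀ i k, x i k ∈ Set.Icc (-1 : ℝ) 1)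
    (ε : ℝ) (hε : ε ∈ Set.Ioo (-(1/2) : ℝ) (1/2)) (i : ℕ) (N : ℕ) (hN : 1 ≤ N) :
    (∑' j : {j : ℕ // (N : ℝ) ≤ ‖fun k => ((v i k : ℝ) - (v j k : ℝ))‖},
        f (fun k => ((v i k : ℝ) - (v (j : ℕ) k : ℝ)) + ε * (x i k - x (j : ℕ) k)))
      ≤ 2 ^ d * d *
          ∑' j : {j : ℕ // N - 1 ≤ j},
            (((j : ℕ) : ℝ) + 3 / 2) ^ (d - 1) / (1 + ((j : ℕ) : ℝ) ^ (d + 1)) := by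
  classical
  have hnorm (j : ℕ) : ‖fun k => ((v i k : ℝ) - (v j k : ℝ))‖ = intSup (v i - v j) := by
    rw [← norm_eq_intSup]; simp
  have hsum : Summable fun j : {j : ℕ // N - 1 ≤ j} =>
      (((j : ℕ) : ℝ) + 3 / 2) ^ (d - 1) / (1 + ((j : ℕ) : ℝ) ^ (d + 1)) :=
    (summable_rhs hd).subtype {j : ℕ | N - 1 ≤ j}
  rw [← tsum_mul_left]
  refine Real.tsum_le_of_sum_le (fun j => hf0 _) fun S => ?_
  have hle (j : {j : ℕ // (N : ℝ) ≤ ‖fun k => ((v i k : ℝ) - (v j k : ℝ))‖}) :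
      N ≤ intSup (v i - v j) := by
    have := j.2
    rw [hnorm] at this
    exact_mod_cast this
  -- The index `n = m - 1` of the sphere of radius `m` containing `vᵢ - vⱼ`; here `m ≥ N ≥ 1`.
  let g : {j : ℕ // (N : ℝ) ≤ ‖fun k => ((v i k : ℝ) - (v j k : ℝ))‖} → {j : ℕ // N - 1 ≤ j} :=
    fun j => ⟨intSup (v i - v j) - 1, Nat.sub_le_sub_right (hle j) 1⟩
  have hg (j : {j : ℕ // (N : ℝ) ≤ ‖fun k => ((v i k : ℝ) - (v j k : ℝ))‖}) :
      intSup (v i - v (j : ℕ)) = (g j : ℕ) + 1 := by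
    have := hle j
    simp only [g]
    omega
  rw [← Finset.sum_fiberwise_of_maps_to (t := S.image g) (g := g)
    fun j hj => Finset.mem_image_of_mem g hj]
  refine le_trans (Finset.sum_le_sum fun n _ => ?_)
    ((hsum.mul_left (2 ^ d * (d : ℝ))).sum_le_tsum (S.image g) fun n _ => by positivity)
  have hterm : ∀ j ∈ S.filter (fun j => g j = n),
      f (fun k => ((v i k : ℝ) - (v (j : ℕ) k : ℝ)) + ε * (x i k - x (j : ℕ) k))
        ≤ 1 / (1 + ((n : ℕ) : ℝ) ^ (d + 1)) := by
    intro j hj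
    have hjn : g j = n := (Finset.mem_filter.1 hj).2
    refine (hf _).trans ?_
    have h := perturbed_norm_ge (fun k => ((v i k : ℝ) - (v j k : ℝ))) (x i) (x j)
      (hx i) (hx j) ε hε
    rw [hnorm, hg, hjn] at h
    push_cast at h
    rw [add_sub_cancel_right] at h
    gcongr
  refine (Finset.sum_le_card_nsmul _ _ _ hterm).trans ?_
  have hinj : Function.Injective
      fun j : {j : ℕ // (N : ℝ) ≤ ‖fun k => ((v i k : ℝ) - (v j k : ℝ))‖} => v i - v (j : ℕ) :=
    fun a b hab => Subtype.ext (hv (sub_right_injective hab))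
  have hcard := card_fiber_le hd (n : ℕ) ((S.filter fun j => g j = n).image
    fun j : {j : ℕ // (N : ℝ) ≤ ‖fun k => ((v i k : ℝ) - (v j k : ℝ))‖} => v i - v (j : ℕ)) fun w hw => by
      obtain ⟨j, hj, rfl⟩ := Finset.mem_image.1 hw
      rw [hg, (Finset.mem_filter.1 hj).2]
  rw [Finset.card_image_of_injective _ hinj] at hcard
  rw [nsmul_eq_mul, mul_one_div, ← mul_div_assoc]
  gcongr
end

section
/- Let Θ = [θ_inf, θ_sup]^p ⊂ ℝ^p and let Ĥ : ℝ^d × Θ → ℝ be continuous, strictly positive everywhere, with Ĥ(·, θ) integrable on ℝ^d and even in its first argument for each θ ∈ Θ. Define K_θ(t) = ∫_{ℝ^d} Ĥ(f, θ) cos(f · t) df. Then for every δ ∈ [0, 1/2) there exists a constant C_δ > 0 such that: for every θ ∈ Θ, every ε with |ε| ≤ δ, every n ∈ ℕ, all pairwise distinct v_1, …, v_n ∈ ℤ^d, all x_1, …, x_n ∈ [−1,1]^d, and every c ∈ ℝ^n, one has Σ_{i=1}^n Σ_{j=1}^n c_i c_j K_θ(v_i − v_j + ε(x_i − x_j)) ≥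 C_δ · Σ_{i=1}^n c_i². Equivalently, all eigenvalues of the symmetric matrix (K_θ(v_i − v_j + ε(x_i − x_j)))_{1 ≤ i,j ≤ n} are at least C_δ. -/
open MeasureTheory

/-!
Write `t i = v i + ε x i`. Since `∑ i, ∑ j, c i c j cos (f · (t i - t j))` is a sum of two squares,
the quadratic form `∑ i, ∑ j, c i c j ∫ g(f) cos (f · (t i - t j)) df` is monotone in the weight
`g` (`quad_mono`). On a cube `[-R, R]^d`, compactness of the cube times `Θ` gives `Ĥ ≥ m > 0`, so
`Ĥ(·, θ)` may be replaced by `m` times the product of triangle functions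
`∏ k, max 0 (1 - |f k| / R)`, which is at most `1` and vanishes off the cube.

The Fourier transform of this product is a product of Fejér kernels, each equal to `R` at `0` and
bounded in norm by `R` and by `4 / (R t²)`. As the `k`-th coordinate of `t i - t j` is at least
`(1 - 2δ) |v i k - v j k|` in absolute value (`gap`), the entry `(i, j)` of the new matrix is at
most `R^d ∏ k, maj κ (v i k - v j k)` with `maj κ 0 = 1`, `maj κ m = κ / m²` for `m ≠ 0`, and
`κ = 4 / (R² (1 - 2δ)²)`. Summed over distinct lattice points, these products are at most
`(1 + κ ∑ 1/m²)^d` (`sum_prod_maj_le`), which is at most `3/2` once `R` is large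
(`exists_radius`). The matrix then has diagonal `R^d` and off-diagonal absolute row sums at most
`R^d / 2`, so diagonal dominance (`quad_lower`) yields the constant `m R^d / 2`, in which neither
`θ` nor the configuration appears.
-/

/-! ### The triangle function and its Fourier transform -/

/-- The triangle function of height `1` supported on `[-R, R]` (for `R > 0`). -/
noncomputable def tri (R x : ℝ) : ℝ := max 0 (1 - |x| / R)

lemma tri_continuous (R : ℝ) : Continuous (tri R) := by unfold tri; fun_prop

lemma tri_nonneg (R x : ℝ) : 0 ≤ tri R x := le_max_left _ _

lemma tri_le_one {R : ℝ} (hR : 0 < R) (x : ℝ) : tri R x ≤ 1 :=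
  max_le zero_le_one (by have : 0 ≤ |x| / R := by positivity
                         linarith)

lemma tri_eq_zero {R : ℝ} (hR : 0 < R) {x : ℝ} (hx : R ≤ |x|) : tri R x = 0 :=
  max_eq_left (by rw [sub_nonpos, le_div_iff₀ hR]; linarith)

lemma tri_neg (R x : ℝ) : tri R (-x) = tri R x := by simp [tri]

lemma tri_eq {R : ℝ} (hR : 0 < R) {x : ℝ} (h0 : 0 ≤ x) (hx : x ≤ R) :
    tri R x = 1 - x / R := by
  rw [tri, abs_of_nonneg h0]
  exact max_eq_right (by rw [sub_nonneg, div_le_one hR]; exact hx)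

lemma tri_integrable {R : ℝ} (hR : 0 < R) : Integrable (tri R) := by
  refine (tri_continuous R).integrable_of_hasCompactSupport ?_
  refine HasCompactSupport.intro (isCompact_Icc (a := -R) (b := R)) fun x hx => ?_
  refine tri_eq_zero hR ?_
  by_contra! h
  exact hx ⟨(abs_lt.1 h).1.le, (abs_lt.1 h).2.le⟩

/-- The Fourier transform `t ↦ ∫ tri R x · exp (i x t) dx`, without a `2π` in the phase. -/
noncomputable def triFT (R t : ℝ) : ℂ := ∫ x : ℝ, (tri R x : ℂ) * Complex.exp (x * t * Complex.I)

lemma triFT_eq {R : ℝ} (hR : 0 < R) (t : ℝ) : triFT R t =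
    (∫ x in (0 : ℝ)..R, ((1 - x / R : ℝ) : ℂ) * Complex.exp (x * t * Complex.I)) +
    ∫ x in (0 : ℝ)..R, ((1 - x / R : ℝ) : ℂ) * Complex.exp (x * (-t : ℝ) * Complex.I) := by
  have hc : Continuous fun x : ℝ => (tri R x : ℂ) * Complex.exp (x * t * Complex.I) := by
    have := tri_continuous R
    fun_prop
  have h1 : triFT R t
      = ∫ x in (-R)..R, (tri R x : ℂ) * Complex.exp (x * t * Complex.I) := by
    rw [intervalIntegral.integral_of_le (by linarith), triFT,
      setIntegral_eq_integral_of_forall_compl_eq_zero]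
    intro x hx
    rw [tri_eq_zero hR, Complex.ofReal_zero, zero_mul]
    by_contra! h
    exact hx ⟨(abs_lt.1 h).1, (abs_lt.1 h).2.le⟩
  have h2 : ∀ s : ℝ, ∫ x in (0 : ℝ)..R, (tri R x : ℂ) * Complex.exp (x * s * Complex.I)
      = ∫ x in (0 : ℝ)..R, ((1 - x / R : ℝ) : ℂ) * Complex.exp (x * s * Complex.I) := by
    intro s
    refine intervalIntegral.integral_congr fun x hx => ?_
    rw [Set.uIcc_of_le hR.le] at hx
    simp only [tri_eq hR hx.1 hx.2]
  rw [h1, ← intervalIntegral.integral_add_adjacent_intervals (b := 0)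
    (hc.intervalIntegrable _ _) (hc.intervalIntegrable _ _), ← h2, ← h2, add_comm]
  congr 1
  rw [← neg_zero, ← intervalIntegral.integral_comp_neg]
  simp [tri_neg]

/-- Each half of the triangle contributes a term `1 / (i t)` from the jump at `0`; it is odd in `t`,
so it cancels when the two halves are added. -/
lemma half_integral {R : ℝ} (hR : 0 < R) {t : ℝ} (ht : t ≠ 0) :
    ∫ x in (0 : ℝ)..R, ((1 - x / R : ℝ) : ℂ) * Complex.exp (x * t * Complex.I)
      = (1 - Complex.exp (R * t * Complex.I)) / (R * t ^ 2) - 1 / (t * Complex.I) := by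
  have hR' : (R : ℂ) ≠ 0 := by exact_mod_cast hR.ne'
  have ht' : (t : ℂ) ≠ 0 := by exact_mod_cast ht
  have hI := Complex.I_ne_zero
  have key : ∀ x : ℝ, HasDerivAt (fun y : ℝ => Complex.exp (y * t * Complex.I) *
      ((1 - y / R) / (t * Complex.I) - 1 / (R * t ^ 2)))
      (((1 - x / R : ℝ) : ℂ) * Complex.exp (x * t * Complex.I)) x := by
    intro x
    have h0 : HasDerivAt (fun y : ℝ => (y : ℂ)) 1 x := Complex.ofRealCLM.hasDerivAt
    have h1 := ((h0.mul_const (t : ℂ)).mul_const Complex.I).cexp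
    have h2 := (((h0.div_const (R : ℂ)).const_sub 1).div_const (t * Complex.I)).sub_const
      (1 / (R * t ^ 2) : ℂ)
    refine (h1.mul h2).congr_deriv ?_
    push_cast
    field_simp
    ring_nf
    simp only [Complex.I_sq]
    ring
  rw [intervalIntegral.integral_eq_sub_of_hasDerivAt (fun x _ => key x)]
  · simp only [Complex.ofReal_zero, zero_mul, Complex.exp_zero, zero_div, div_self hR']
    field_simp
    ring
  · apply Continuous.intervalIntegrable; fun_prop

/-- The quadratic decay in `t` makes the off-diagonal entries summable over the lattice. -/
lemma norm_triFT_le {R : ℝ} (hR : 0 < R) {t : ℝ} (ht : t ≠ 0) :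
    ‖triFT R t‖ ≤ 4 / (R * t ^ 2) := by
  have : triFT R t = ((1 - Complex.exp ((R * t : ℝ) * Complex.I)) +
      (1 - Complex.exp ((R * (-t) : ℝ) * Complex.I))) / ((R * t ^ 2 : ℝ) : ℂ) := by
    rw [triFT_eq hR, half_integral hR ht, half_integral hR (neg_ne_zero.2 ht)]
    have hR' : (R : ℂ) ≠ 0 := by exact_mod_cast hR.ne'
    have ht' : (t : ℂ) ≠ 0 := by exact_mod_cast ht
    push_cast
    field_simp
    ring
  rw [this, norm_div, Complex.norm_real, Real.norm_of_nonneg (by positivity)]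
  gcongr
  have h : ∀ s : ℝ, ‖1 - Complex.exp (s * Complex.I)‖ ≤ 2 := fun s => by
    refine (norm_sub_le _ _).trans ?_
    rw [Complex.norm_exp_ofReal_mul_I, norm_one]; norm_num
  exact (norm_add_le _ _).trans (by linarith [h (R * t), h (R * (-t))])

lemma triFT_zero {R : ℝ} (hR : 0 < R) : triFT R 0 = R := by
  have h : ∫ x in (0 : ℝ)..R, (1 - x / R) = R / 2 := by
    rw [intervalIntegral.integral_sub (by simp) (by simp), intervalIntegral.integral_div]
    simp
    field_simp
    norm_num
  rw [triFT_eq hR]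
  simp only [neg_zero, Complex.ofReal_zero, mul_zero, zero_mul, Complex.exp_zero, mul_one]
  rw [intervalIntegral.integral_ofReal, h, ← Complex.ofReal_add, add_halves]

lemma norm_triFT_le_self {R : ℝ} (hR : 0 < R) (t : ℝ) : ‖triFT R t‖ ≤ R := by
  have h : ∫ x, tri R x = R := by
    have := triFT_zero hR
    simp only [triFT, Complex.ofReal_zero, mul_zero, zero_mul, Complex.exp_zero, mul_one,
      integral_complex_ofReal] at this
    exact_mod_cast this
  refine (norm_integral_le_integral_norm _).trans (le_of_eq ?_)
  rw [← h]
  congr 1; ext x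
  rw [norm_mul, ← Complex.ofReal_mul, Complex.norm_exp_ofReal_mul_I, mul_one, Complex.norm_real,
    Real.norm_of_nonneg (tri_nonneg _ _), h]

/-! ### The product weight on `ℝ^d` -/

/-- The tensor product of triangle functions, supported on the cube `[-R, R]^d`. -/
noncomputable def triProd {d : ℕ} (R : ℝ) (f : Fin d → ℝ) : ℝ := ∏ k, tri R (f k)

lemma triProd_nonneg {d : ℕ} (R : ℝ) (f : Fin d → ℝ) : 0 ≤ triProd R f :=
  Finset.prod_nonneg fun _ _ => tri_nonneg _ _

lemma triProd_le_one {d : ℕ} {R : ℝ} (hR : 0 < R) (f : Fin d → ℝ) : triProd R f ≤ 1 :=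
  Finset.prod_le_one (fun _ _ => tri_nonneg _ _) fun _ _ => tri_le_one hR _

lemma triProd_eq_zero {d : ℕ} {R : ℝ} (hR : 0 < R) {f : Fin d → ℝ}
    (hf : f ∉ Set.Icc (fun _ => -R) fun _ => R) : triProd R f = 0 := by
  by_contra h
  rw [triProd, ← ne_eq, Finset.prod_ne_zero_iff] at h
  have : ∀ k, |f k| < R := fun k => by
    by_contra! hk
    exact h k (Finset.mem_univ _) (tri_eq_zero hR hk)
  exact hf ⟨fun k => (abs_lt.1 (this k)).1.le, fun k => (abs_lt.1 (this k)).2.le⟩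

lemma triProd_integrable {d : ℕ} {R : ℝ} (hR : 0 < R) :
    Integrable (triProd R : (Fin d → ℝ) → ℝ) :=
  Integrable.fintype_prod (f := fun _ => tri R) fun _ => tri_integrable hR

lemma integrable_mul_cos {d : ℕ} {g : (Fin d → ℝ) → ℝ} (hg : Integrable g) (t : Fin d → ℝ) :
    Integrable fun f => g f * Real.cos (∑ k, f k * t k) := by
  refine hg.mul_bdd (c := 1) (Continuous.aestronglyMeasurable (by fun_prop)) ?_
  exact Filter.Eventually.of_forall fun f => Real.abs_cos_le_one _

lemma integral_triProd_cos {d : ℕ} {R : ℝ} (hR : 0 < R) (t : Fin d → ℝ) :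
    ∫ f : Fin d → ℝ, triProd R f * Real.cos (∑ k, f k * t k) = (∏ k, triFT R (t k)).re := by
  have h1 : ∀ f : Fin d → ℝ,
      (∏ k, (tri R (f k) : ℂ) * Complex.exp (f k * t k * Complex.I))
        = (triProd R f : ℂ) * Complex.exp ((∑ k, f k * t k : ℝ) * Complex.I) := fun f => by
    rw [Finset.prod_mul_distrib, ← Complex.exp_sum, triProd]
    push_cast
    rw [Finset.sum_mul]
  have hi : Integrable fun f : Fin d → ℝ =>
      ∏ k, (tri R (f k) : ℂ) * Complex.exp (f k * t k * Complex.I) := by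
    refine Integrable.fintype_prod
      (f := fun k (x : ℝ) => (tri R x : ℂ) * Complex.exp (x * t k * Complex.I)) fun k => ?_
    refine (tri_integrable hR).ofReal.mul_bdd (c := 1)
      (Continuous.aestronglyMeasurable (by fun_prop)) ?_
    refine Filter.Eventually.of_forall fun x => ?_
    rw [← Complex.ofReal_mul, Complex.norm_exp_ofReal_mul_I]
  have h2 := integral_re hi
  rw [integral_fintype_prod_volume_eq_prod
    (f := fun k (x : ℝ) => (tri R x : ℂ) * Complex.exp (x * t k * Complex.I))] at h2
  refine Eq.trans ?_ h2
  congr 1; ext f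
  rw [h1, RCLike.re_eq_complex_re, Complex.re_ofReal_mul, Complex.exp_ofReal_mul_I_re]

/-! ### Lattice sums -/

/-- The one-dimensional majorant of the normalised Fejér kernel: `1` at `m = 0` and `κ / m²`
elsewhere. At `m = 0` the second summand vanishes because `1 / 0 = 0`. -/
noncomputable def maj (κ : ℝ) (m : ℤ) : ℝ := (if m = 0 then 1 else 0) + κ * (1 / (m : ℝ) ^ 2)

lemma maj_nonneg {κ : ℝ} (hκ : 0 ≤ κ) (m : ℤ) : 0 ≤ maj κ m := by
  unfold maj; split_ifs <;> positivity

lemma sum_maj_le {κ : ℝ} (hκ : 0 ≤ κ) (s : Finset ℤ) :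
    ∑ m ∈ s, maj κ m ≤ 1 + κ * ∑' m : ℤ, 1 / (m : ℝ) ^ 2 := by
  simp only [maj, Finset.sum_add_distrib, ← Finset.mul_sum]
  gcongr
  · rw [Finset.sum_ite_eq']; split_ifs <;> norm_num
  · exact (Real.summable_one_div_int_pow.2 (by norm_num)).sum_le_tsum _ fun _ _ => by positivity

/-- The image of `u` lies in a finite box, over which the sum of products factors into a product of
one-dimensional sums. -/
lemma sum_prod_maj_le {d n : ℕ} {κ : ℝ} (hκ : 0 ≤ κ) (u : Fin n → Fin d → ℤ)
    (hu : Function.Injective u) :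
    ∑ j, ∏ k, maj κ (u j k) ≤ (1 + κ * ∑' m : ℤ, 1 / (m : ℝ) ^ 2) ^ d := by
  classical
  calc ∑ j, ∏ k, maj κ (u j k) = ∑ w ∈ Finset.univ.image u, ∏ k, maj κ (w k) := by
        rw [Finset.sum_image hu.injOn]
    _ ≤ ∑ w ∈ Fintype.piFinset fun k => Finset.univ.image fun j => u j k, ∏ k, maj κ (w k) := by
        refine Finset.sum_le_sum_of_subset_of_nonneg (fun w hw => ?_)
          fun _ _ _ => Finset.prod_nonneg fun _ _ => maj_nonneg hκ _
        obtain ⟨j, -, rfl⟩ := Finset.mem_image.1 hw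
        exact Fintype.mem_piFinset.2 fun k => Finset.mem_image_of_mem _ (Finset.mem_univ j)
    _ = ∏ k : Fin d, ∑ m ∈ Finset.univ.image fun j => u j k, maj κ m :=
        (Finset.prod_univ_sum _ _).symm
    _ ≤ ∏ _k : Fin d, (1 + κ * ∑' m : ℤ, 1 / (m : ℝ) ^ 2) :=
        Finset.prod_le_prod (fun _ _ => Finset.sum_nonneg fun _ _ => maj_nonneg hκ _)
          fun _ _ => sum_maj_le hκ _
    _ = _ := by simp

lemma norm_triFT_le_maj {R s : ℝ} (hR : 0 < R) (hs : 0 < s) {t : ℝ} {m : ℤ}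
    (h : s * |(m : ℝ)| ≤ |t|) : ‖triFT R t‖ ≤ R * maj (4 / (R ^ 2 * s ^ 2)) m := by
  rcases eq_or_ne m 0 with rfl | hm
  · simpa [maj] using norm_triFT_le_self hR t
  · have hm' : 0 < |(m : ℝ)| := by positivity
    have ht : t ≠ 0 := abs_pos.1 ((by positivity : 0 < s * |(m : ℝ)|).trans_le h)
    refine (norm_triFT_le hR ht).trans ?_
    have h2 : s ^ 2 * (m : ℝ) ^ 2 ≤ t ^ 2 := by
      rw [← sq_abs t, ← sq_abs (m : ℝ), ← mul_pow]
      gcongr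
    have hm2 : 0 < (m : ℝ) ^ 2 := by positivity
    calc 4 / (R * t ^ 2) ≤ 4 / (R * (s ^ 2 * (m : ℝ) ^ 2)) := by gcongr
      _ = R * maj (4 / (R ^ 2 * s ^ 2)) m := by
        rw [maj, if_neg hm]
        field_simp
        ring

/-! ### Quadratic forms -/

/-- Diagonal dominance. The majorant satisfies `B i i ≥ 1` whenever `a > 0`, so row and column sums
of `B` bounded by `3/2` leave at most `1/2` off the diagonal. -/
lemma quad_lower {n : ℕ} (A B : Fin n → Fin n → ℝ) {a : ℝ} (ha : 0 ≤ a)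
    (hA : ∀ i, A i i = a) (hAB : ∀ i j, |A i j| ≤ a * B i j)
    (hrow : ∀ i, ∑ j, B i j ≤ 3 / 2) (hcol : ∀ j, ∑ i, B i j ≤ 3 / 2) (c : Fin n → ℝ) :
    a / 2 * ∑ i, c i ^ 2 ≤ ∑ i, ∑ j, c i * c j * A i j := by
  have hterm : ∀ i j, (if i = j then 2 * a * c i ^ 2 else 0)
      - (a / 2 * (c i ^ 2 * B i j) + a / 2 * (c j ^ 2 * B i j)) ≤ c i * c j * A i j := by
    intro i j
    have hb := hAB i j
    split_ifs with hij
    · subst hij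
      rw [hA] at hb ⊢
      have : a ≤ a * B i i := (le_abs_self a).trans hb
      nlinarith [mul_le_mul_of_nonneg_left this (sq_nonneg (c i))]
    · have h1 : |c i * c j * A i j| ≤ (c i ^ 2 + c j ^ 2) / 2 * (a * B i j) := by
        rw [abs_mul]
        refine mul_le_mul ?_ hb (abs_nonneg _) (by positivity)
        rw [abs_mul]
        nlinarith [sq_nonneg (|c i| - |c j|), sq_abs (c i), sq_abs (c j)]
      linarith [neg_abs_le (c i * c j * A i j)]
  refine le_trans ?_ (Finset.sum_le_sum fun i _ => Finset.sum_le_sum fun j _ => hterm i j)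
  simp only [Finset.sum_sub_distrib, Finset.sum_add_distrib, Finset.sum_ite_eq, Finset.mem_univ,
    if_true, ← Finset.mul_sum]
  have e1 : ∑ i, c i ^ 2 * ∑ j, B i j ≤ ∑ i, c i ^ 2 * (3 / 2) :=
    Finset.sum_le_sum fun i _ => mul_le_mul_of_nonneg_left (hrow i) (sq_nonneg _)
  have e2 : ∑ i, ∑ j, c j ^ 2 * B i j ≤ ∑ i, c i ^ 2 * (3 / 2) := by
    rw [Finset.sum_comm]
    simp only [← Finset.mul_sum]
    exact Finset.sum_le_sum fun i _ => mul_le_mul_of_nonneg_left (hcol i) (sq_nonneg _)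
  rw [← Finset.sum_mul] at e1 e2
  nlinarith [mul_le_mul_of_nonneg_left e1 ha, mul_le_mul_of_nonneg_left e2 ha]

lemma sum_cos_sub_nonneg {n : ℕ} (c y : Fin n → ℝ) :
    0 ≤ ∑ i, ∑ j, c i * c j * Real.cos (y i - y j) := by
  have : ∑ i, ∑ j, c i * c j * Real.cos (y i - y j)
      = (∑ i, c i * Real.cos (y i)) ^ 2 + (∑ i, c i * Real.sin (y i)) ^ 2 := by
    rw [sq, sq, Finset.sum_mul_sum, Finset.sum_mul_sum, ← Finset.sum_add_distrib]
    refine Finset.sum_congr rfl fun i _ => ?_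
    rw [← Finset.sum_add_distrib]
    refine Finset.sum_congr rfl fun j _ => ?_
    rw [Real.cos_sub]; ring
  rw [this]; positivity

/-- The quadratic form is monotone in the spectral weight. -/
lemma quad_mono {d n : ℕ} {g h : (Fin d → ℝ) → ℝ} (hg : Integrable g) (hh : Integrable h)
    (hgh : ∀ f, g f ≤ h f) (T : Fin n → Fin d → ℝ) (c : Fin n → ℝ) :
    ∑ i, ∑ j, c i * c j * ∫ f : Fin d → ℝ, g f * Real.cos (∑ k, f k * (T i k - T j k))
      ≤ ∑ i, ∑ j, c i * c j * ∫ f : Fin d → ℝ, h f * Real.cos (∑ k, f k * (T i k - T j k)) := by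
  have key : ∀ g : (Fin d → ℝ) → ℝ, Integrable g →
      (Integrable fun f => g f *
        ∑ i, ∑ j, c i * c j * Real.cos (∑ k, f k * (T i k - T j k))) ∧
      ∑ i, ∑ j, c i * c j * ∫ f : Fin d → ℝ, g f * Real.cos (∑ k, f k * (T i k - T j k))
      = ∫ f : Fin d → ℝ, g f *
        ∑ i, ∑ j, c i * c j * Real.cos (∑ k, f k * (T i k - T j k)) := by
    intro g hg
    have hI : ∀ i j, Integrable fun f : Fin d → ℝ =>
        c i * c j * (g f * Real.cos (∑ k, f k * (T i k - T j k))) := fun i j =>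
      (integrable_mul_cos hg fun k => T i k - T j k).const_mul _
    have e : (fun f : Fin d → ℝ => g f *
        ∑ i, ∑ j, c i * c j * Real.cos (∑ k, f k * (T i k - T j k))) = fun f =>
        ∑ i, ∑ j, c i * c j * (g f * Real.cos (∑ k, f k * (T i k - T j k))) := by
      ext f
      simp only [Finset.mul_sum]
      exact Finset.sum_congr rfl fun i _ => Finset.sum_congr rfl fun j _ => by ring
    rw [e]
    refine ⟨integrable_finsetSum _ fun i _ => integrable_finsetSum _ fun j _ => hI i j, ?_⟩
    rw [integral_finsetSum _ fun i _ => integrable_finsetSum _ fun j _ => hI i j]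
    refine Finset.sum_congr rfl fun i _ => ?_
    rw [integral_finsetSum _ fun j _ => hI i j]
    exact Finset.sum_congr rfl fun j _ => (integral_const_mul _ _).symm
  rw [(key g hg).2, (key h hh).2]
  refine integral_mono (key g hg).1 (key h hh).1 fun f => ?_
  refine mul_le_mul_of_nonneg_right (hgh f) ?_
  have := sum_cos_sub_nonneg c fun i => ∑ k, f k * T i k
  simpa only [← Finset.sum_sub_distrib, ← mul_sub] using this

/-! ### Choice of the cube and separation of the perturbed points -/

lemma exists_radius (d : ℕ) {s : ℝ} (hs : 0 < s) : ∃ R : ℝ, 0 < R ∧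
    (1 + 4 / (R ^ 2 * s ^ 2) * ∑' m : ℤ, 1 / (m : ℝ) ^ 2) ^ d ≤ 3 / 2 := by
  have h1 : Filter.Tendsto (fun R : ℝ => R ^ 2 * s ^ 2) Filter.atTop Filter.atTop :=
    (Filter.tendsto_pow_atTop two_ne_zero).atTop_mul_const (by positivity)
  have h2 : Filter.Tendsto
      (fun R : ℝ => (1 + 4 / (R ^ 2 * s ^ 2) * ∑' m : ℤ, 1 / (m : ℝ) ^ 2) ^ d)
      Filter.atTop (nhds ((1 + 0 * ∑' m : ℤ, 1 / (m : ℝ) ^ 2) ^ d)) :=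
    (((h1.const_div_atTop 4).mul_const _).const_add 1).pow d
  rw [zero_mul, add_zero, one_pow] at h2
  obtain ⟨R, hR, hR0⟩ := ((h2.eventually (Iio_mem_nhds (by norm_num : (1 : ℝ) < 3 / 2))).and
    (Filter.eventually_gt_atTop 0)).exists
  exact ⟨R, hR0, hR.le⟩

/-- Perturbation by at most `2δ` keeps a nonzero integer `m` at distance at least
`|m| - 2δ ≥ (1 - 2δ) |m|` from `0`. -/
lemma gap {δ ε a b : ℝ} (hε : |ε| ≤ δ) (ha : a ∈ Set.Icc (-1 : ℝ) 1)
    (hb : b ∈ Set.Icc (-1 : ℝ) 1) (m : ℤ) :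
    (1 - 2 * δ) * |(m : ℝ)| ≤ |(m : ℝ) + ε * (a - b)| := by
  have hδ0 : 0 ≤ δ := (abs_nonneg ε).trans hε
  rcases eq_or_ne m 0 with rfl | hm
  · rw [Int.cast_zero, abs_zero, mul_zero]; exact abs_nonneg _
  · have hm1 : (1 : ℝ) ≤ |(m : ℝ)| := by exact_mod_cast Int.one_le_abs hm
    have hab : |a - b| ≤ 2 := abs_le.2 ⟨by linarith [ha.1, hb.2], by linarith [ha.2, hb.1]⟩
    have h1 : |ε * (a - b)| ≤ δ * 2 := by
      rw [abs_mul]; exact mul_le_mul hε hab (abs_nonneg _) hδ0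
    have h2 := abs_sub_abs_le_abs_sub (m : ℝ) (-(ε * (a - b)))
    rw [abs_neg, sub_neg_eq_add] at h2
    nlinarith



/-- Proposition D.4 of the paper: if the covariance functions `K_θ` are given by
`K_θ(t) = ∫ Ĥ(f,θ) cos(f·t) df` with `Ĥ` continuous on `ℝ^d × Θ`, positive,
integrable and even in `f`, then for every `δ ∈ [0,1/2)` there exists `C_δ > 0`
such that for all `θ ∈ Θ`, `|ε| ≤ δ`, `n`, pairwise distinct `v₁,…,vₙ ∈ ℤ^d`,
`x₁,…,xₙ ∈ [-1,1]^d` and `c ∈ ℝⁿ`, the quadratic form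
`Σᵢ Σⱼ cᵢ cⱼ K_θ(vᵢ - vⱼ + ε(xᵢ - xⱼ))` is at least `C_δ Σᵢ cᵢ²`. -/
theorem stmt5 (d p : ℕ) (hd : 1 ≤ d) (hp : 1 ≤ p)
    (θinf θsup : ℝ) (hθ : θinf < θsup)
    (Hhat : (Fin d → ℝ) → (Fin p → ℝ) → ℝ)
    (hcont : ContinuousOn (fun q : (Fin d → ℝ) × (Fin p → ℝ) => Hhat q.1 q.2)
      (Set.univ ×ˢ Set.pi Set.univ fun _ => Set.Icc θinf θsup))
    (hpos : ∀ (f : Fin d → ℝ), ∀ θ ∈ Set.pi Set.univ fun _ : Fin p => Set.Icc θinf θsup,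
      0 < Hhat f θ)
    (hint : ∀ θ ∈ Set.pi Set.univ fun _ : Fin p => Set.Icc θinf θsup,
      Integrable (fun f => Hhat f θ))
    (heven : ∀ (f : Fin d → ℝ) (θ : Fin p → ℝ), Hhat (-f) θ = Hhat f θ)
    (δ : ℝ) (hδ : δ ∈ Set.Ico (0 : ℝ) (1/2)) :
    ∃ C : ℝ, 0 < C ∧
      ∀ θ ∈ Set.pi Set.univ fun _ : Fin p => Set.Icc θinf θsup,
      ∀ ε : ℝ, |ε| ≤ δ →
      ∀ (n : ℕ) (v : Fin n → Fin d → ℤ), Function.Injective v →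
      ∀ x : Fin n → Fin d → ℝ, (∀ i k, x i k ∈ Set.Icc (-1 : ℝ) 1) →
      ∀ c : Fin n → ℝ,
        C * ∑ i, (c i) ^ 2
          ≤ ∑ i, ∑ j, c i * c j *
              ∫ f : Fin d → ℝ,
                Hhat f θ *
                  Real.cos (∑ k, f k *
                    (((v i k : ℝ) - (v j k : ℝ)) + ε * (x i k - x j k))) := by
  have hs : 0 < 1 - 2 * δ := by linarith [hδ.2]
  obtain ⟨R, hR, hRs⟩ := exists_radius d hs
  set κ := 4 / (R ^ 2 * (1 - 2 * δ) ^ 2) with hκ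
  have hκ0 : 0 ≤ κ := by positivity
  -- A uniform positive lower bound for `Ĥ` on the compact set `[-R, R]^d × Θ`.
  obtain ⟨m, hm, hmle⟩ : ∃ m : ℝ, 0 < m ∧ ∀ f ∈ Set.Icc (fun _ : Fin d => -R) fun _ => R,
      ∀ θ ∈ Set.pi Set.univ fun _ : Fin p => Set.Icc θinf θsup, m ≤ Hhat f θ := by
    obtain ⟨q, hq, hmin⟩ := (isCompact_Icc (a := fun _ : Fin d => -R) (b := fun _ => R)).prod
      (isCompact_univ_pi fun _ : Fin p => isCompact_Icc (a := θinf) (b := θsup))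
      |>.exists_isMinOn ⟨(fun _ => 0, fun _ => θinf),
        ⟨fun _ => by simpa using hR.le, fun _ => hR.le⟩, fun _ _ => ⟨le_rfl, hθ.le⟩⟩
      (hcont.mono (Set.prod_mono_left (Set.subset_univ _)))
    exact ⟨_, hpos _ _ hq.2, fun f hf θ hθ => hmin (Set.mk_mem_prod hf hθ)⟩
  refine ⟨m * (R ^ d / 2), by positivity, fun θ hθ ε hε n v hv x hx c => ?_⟩
  have hT : ∀ i j k, ((v i k : ℝ) - (v j k : ℝ)) + ε * (x i k - x j k)
      = ((v i k : ℝ) + ε * x i k) - ((v j k : ℝ) + ε * x j k) := fun i j k => by ring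
  have hmono := quad_mono (g := fun f => m * triProd R f) (h := fun f => Hhat f θ)
    ((triProd_integrable hR).const_mul m) (hint θ hθ) (fun f => by
      by_cases hf : f ∈ Set.Icc (fun _ : Fin d => -R) fun _ => R
      · exact (mul_le_of_le_one_right hm.le (triProd_le_one hR f)).trans (hmle f hf θ hθ)
      · simpa [triProd_eq_zero hR hf] using (hpos f θ hθ).le)
    (fun i k => (v i k : ℝ) + ε * x i k) c
  simp only [← hT] at hmono
  refine le_trans ?_ hmono
  have hlow := quad_lower (a := R ^ d)
    (fun i j => (∏ k, triFT R (((v i k : ℝ) - (v j k : ℝ)) + ε * (x i k - x j k))).re)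
    (fun i j => ∏ k, maj κ (v i k - v j k)) (by positivity)
    (fun i => by
      simp only [sub_self, mul_zero, add_zero, triFT_zero hR, Finset.prod_const,
        Finset.card_univ, Fintype.card_fin]
      rw [← Complex.ofReal_pow, Complex.ofReal_re])
    (fun i j => by
      refine (Complex.abs_re_le_norm _).trans ?_
      rw [norm_prod]
      calc _ ≤ ∏ k, R * maj κ (v i k - v j k) :=
            Finset.prod_le_prod (fun _ _ => norm_nonneg _) fun k _ =>
              norm_triFT_le_maj hR hs (by
                simpa only [Int.cast_sub] using gap hε (hx i k) (hx j k) (v i k - v j k))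
        _ = _ := by simp [Finset.prod_mul_distrib])
    (fun i => (sum_prod_maj_le hκ0 (fun j k => v i k - v j k) fun j j' h =>
      hv (funext fun k => sub_right_injective (congrFun h k))).trans hRs)
    (fun j => (sum_prod_maj_le hκ0 (fun i k => v i k - v j k) fun i i' h =>
      hv (funext fun k => sub_left_injective (congrFun h k))).trans hRs) c
  calc m * (R ^ d / 2) * ∑ i, c i ^ 2 = m * (R ^ d / 2 * ∑ i, c i ^ 2) := by ring
    _ ≤ _ := mul_le_mul_of_nonneg_left hlow hm.le
    _ = _ := by
      simp only [Finset.mul_sum, mul_assoc m, integral_const_mul, integral_triProd_cos hR]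
      exact Finset.sum_congr rfl fun i _ => Finset.sum_congr rfl fun j _ => by ring
end

section
/- For all real numbers 0 < m ≤ M' < ∞ there exists a constant c > 0, depending only on m and M', such that for every n ∈ ℕ and all real symmetric n × n matrices A and B whose eigenvalues all lie in the interval [m, M'], one has log det(B) − log det(A) + tr(B⁻¹ A) − n ≥ c · ‖A − B‖_F². -/
/-!
Diagonalize `A = U diag(α) Uᵀ` and `B = V diag(β) Vᵀ`, put `W = Uᵀ V` and `w i j = (W i j)²`.
Since `W` is orthogonal, `w` is doubly stochastic, and `tr (g(A) f(B)) = ∑ w i j * g (α i) * f (β j)`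
for all functions `f`, `g` (`trace_conj_diagonal_mul`). Consequently both sides of the inequality
are averages against the same weights:
* `log det B - log det A + tr (B⁻¹ A) - n = ∑ w i j * (log β j - log α i + α i / β j - 1)`,
* `‖A - B‖_F² = tr ((A - B)²) = ∑ w i j * (α i - β j)²`.

The claim thus reduces to the inequality `scalar_bound` between numbers, which holds with a constant
depending only on the upper bound for the eigenvalues.
-/

open Matrix

/-- The case `n = 1`. With `t = a / b` and `s = √t`, the bound `log s ≤ s - 1` gives
`t - 1 - log t ≥ (s - 1)² = (t - 1)² / (s + 1)²`, and `(s + 1)² ≤ 2 (t + 1)`. -/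
lemma scalar_bound {M a b : ℝ} (ha : 0 < a) (hb : 0 < b) (haM : a ≤ M) (hbM : b ≤ M) :
    1 / (4 * M ^ 2) * (a - b) ^ 2 ≤ Real.log b - Real.log a + a * b⁻¹ - 1 := by
  have hM : 0 < M := ha.trans_le haM
  obtain ⟨s, hs, hst⟩ : ∃ s : ℝ, 0 < s ∧ s ^ 2 = a / b :=
    ⟨√(a / b), Real.sqrt_pos.2 (by positivity), Real.sq_sqrt (by positivity)⟩
  have hab : a = s ^ 2 * b := by rw [hst]; field_simp
  have hlog : Real.log a = 2 * Real.log s + Real.log b := by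
    rw [hab, Real.log_mul (by positivity) hb.ne', Real.log_pow]; norm_num
  have h1 := Real.log_le_sub_one_of_pos hs
  have h2 : a * b⁻¹ = s ^ 2 := by rw [hst]; rfl
  have h3 : 1 / (4 * M ^ 2) * (a - b) ^ 2 ≤ (s - 1) ^ 2 := by
    rw [one_div, inv_mul_le_iff₀ (by positivity)]
    have h4 : (a - b) ^ 2 = (b ^ 2 * (s + 1) ^ 2) * (s - 1) ^ 2 := by rw [hab]; ring
    rw [h4]
    apply mul_le_mul_of_nonneg_right _ (sq_nonneg _)
    have h5 : b ^ 2 * (s + 1) ^ 2 ≤ b * (2 * (a + b)) := by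
      rw [hab]; nlinarith [mul_nonneg (sq_nonneg b) (sq_nonneg (s - 1))]
    nlinarith [mul_le_mul hbM (add_le_add haM hbM) (by positivity) hM.le]
  nlinarith

lemma trace_conj_diagonal_mul {n : ℕ} (U V : Matrix (Fin n) (Fin n) ℝ) (g f : Fin n → ℝ) :
    ((U * diagonal g * Uᵀ) * (V * diagonal f * Vᵀ)).trace
      = ∑ i, ∑ j, ((Uᵀ * V) i j) ^ 2 * (g i * f j) := by
  have h : ((U * diagonal g * Uᵀ) * (V * diagonal f * Vᵀ)).trace
      = ((diagonal g * (Uᵀ * V)) * (diagonal f * (Uᵀ * V)ᵀ)).trace := by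
    rw [transpose_mul, transpose_transpose, Matrix.mul_assoc U, Matrix.mul_assoc U, trace_mul_comm]
    simp only [Matrix.mul_assoc]
  rw [h, trace]
  refine Finset.sum_congr rfl fun i _ => ?_
  rw [diag_apply, mul_apply]
  refine Finset.sum_congr rfl fun j _ => ?_
  rw [diagonal_mul, diagonal_mul, transpose_apply]
  ring

lemma exists_orthogonal_diagonalization {n : ℕ} {A : Matrix (Fin n) (Fin n) ℝ}
    (hA : A.IsHermitian) :
    ∃ U : Matrix (Fin n) (Fin n) ℝ, Uᵀ * U = 1 ∧ U * Uᵀ = 1 ∧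
      A = U * diagonal hA.eigenvalues * Uᵀ := by
  refine ⟨hA.eigenvectorUnitary, ?_, ?_, ?_⟩
  · simpa [star_eq_conjTranspose] using Unitary.coe_star_mul_self hA.eigenvectorUnitary
  · simpa [star_eq_conjTranspose] using Unitary.coe_mul_star_self hA.eigenvectorUnitary
  · have h := hA.spectral_theorem
    rw [Unitary.conjStarAlgAut_apply] at h
    simpa [star_eq_conjTranspose] using h

lemma log_det_eq_sum {n : ℕ} {A : Matrix (Fin n) (Fin n) ℝ} (hA : A.IsHermitian)
    (h : ∀ i, 0 < hA.eigenvalues i) :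
    Real.log A.det = ∑ i, Real.log (hA.eigenvalues i) := by
  rw [hA.det_eq_prod_eigenvalues]
  exact Real.log_prod fun i _ => (h i).ne'

lemma sum_sq_eq_one {n : ℕ} {W : Matrix (Fin n) (Fin n) ℝ} (h : W * Wᵀ = 1) (i : Fin n) :
    ∑ j, (W i j) ^ 2 = 1 := by
  have := congrFun (congrFun h i) i
  simpa [mul_apply, sq] using this

/-- Key quantitative step in the consistency proof for maximum likelihood: for all
`0 < m ≤ M'` there is `c > 0` such that for every `n` and all real symmetric `n × n`
matrices `A, B` whose eigenvalues all lie in `[m, M']`,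
`log det B - log det A + tr(B⁻¹ A) - n ≥ c ‖A - B‖_F²`. -/
theorem stmt11 (m M' : ℝ) (hm : 0 < m) (hmM : m ≤ M') :
    ∃ c : ℝ, 0 < c ∧
      ∀ (n : ℕ) (A B : Matrix (Fin n) (Fin n) ℝ)
        (hA : A.IsHermitian) (hB : B.IsHermitian),
        (∀ i, hA.eigenvalues i ∈ Set.Icc m M') →
        (∀ i, hB.eigenvalues i ∈ Set.Icc m M') →
        c * ∑ i, ∑ j, ((A - B) i j) ^ 2
          ≤ Real.log B.det - Real.log A.det + (B⁻¹ * A).trace - n := by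
  have hM : 0 < M' := hm.trans_le hmM
  refine ⟨1 / (4 * M' ^ 2), by positivity, fun n A B hA hB hAe hBe => ?_⟩
  have ha : ∀ i, 0 < hA.eigenvalues i := fun i => hm.trans_le (hAe i).1
  have hb : ∀ i, 0 < hB.eigenvalues i := fun i => hm.trans_le (hBe i).1
  rw [log_det_eq_sum hA ha, log_det_eq_sum hB hb]
  have haM : ∀ i, hA.eigenvalues i ≤ M' := fun i => (hAe i).2
  have hbM : ∀ i, hB.eigenvalues i ≤ M' := fun i => (hBe i).2
  obtain ⟨U, hU, hU', hAU⟩ := exists_orthogonal_diagonalization hA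
  obtain ⟨V, hV, hV', hBV⟩ := exists_orthogonal_diagonalization hB
  have hfro : ∑ i, ∑ j, ((A - B) i j) ^ 2
      = (A * A).trace - 2 * (A * B).trace + (B * B).trace := by
    have hS : (A - B)ᵀ = A - B := by simpa using (hA.sub hB).eq
    have h1 : ∑ i, ∑ j, ((A - B) i j) ^ 2 = ((A - B) * (A - B)ᵀ).trace := by
      simp [trace, mul_apply, sq]
    rw [h1, hS, sub_mul, mul_sub, mul_sub, trace_sub, trace_sub, trace_sub, trace_mul_comm B A]
    ring
  rw [hfro, trace_mul_comm B⁻¹ A]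
  generalize hA.eigenvalues = α at *
  generalize hB.eigenvalues = β at *
  have hBinv : B⁻¹ = V * diagonal (fun j => (β j)⁻¹) * Vᵀ := by
    apply inv_eq_right_inv
    have hd : diagonal β * diagonal (fun j => (β j)⁻¹) = (1 : Matrix (Fin n) (Fin n) ℝ) := by
      rw [diagonal_mul_diagonal, ← diagonal_one]
      congr 1; funext j; exact mul_inv_cancel₀ (hb j).ne'
    calc B * (V * diagonal (fun j => (β j)⁻¹) * Vᵀ)
        = V * (diagonal β * (Vᵀ * V) * diagonal (fun j => (β j)⁻¹)) * Vᵀ := by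
          rw [hBV]; simp only [Matrix.mul_assoc]
      _ = 1 := by rw [hV, Matrix.mul_one, hd, Matrix.mul_one, hV']
  have htr : ∀ {P : Matrix (Fin n) (Fin n) ℝ} {γ : Fin n → ℝ}, Pᵀ * P = 1 →
      ((P * diagonal γ * Pᵀ) * (P * diagonal γ * Pᵀ)).trace = ∑ i, γ i ^ 2 := by
    intro P γ hP
    rw [trace_conj_diagonal_mul, hP]
    simp [one_apply, sq]
  have hAA : (A * A).trace = ∑ i, α i ^ 2 := by rw [hAU]; exact htr hU
  have hBB : (B * B).trace = ∑ i, β i ^ 2 := by rw [hBV]; exact htr hV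
  have hAB : (A * B).trace = ∑ i, ∑ j, ((Uᵀ * V) i j) ^ 2 * (α i * β j) := by
    rw [hAU, hBV]; exact trace_conj_diagonal_mul ..
  have hABi : (A * B⁻¹).trace = ∑ i, ∑ j, ((Uᵀ * V) i j) ^ 2 * (α i * (β j)⁻¹) := by
    rw [hBinv, hAU]; exact trace_conj_diagonal_mul ..
  rw [hAA, hBB, hAB, hABi]
  have hW : (Uᵀ * V) * (Uᵀ * V)ᵀ = 1 := by
    rw [transpose_mul, transpose_transpose, Matrix.mul_assoc, ← Matrix.mul_assoc V, hV',
      Matrix.one_mul, hU]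
  have hW' : (Uᵀ * V)ᵀ * (Uᵀ * V)ᵀᵀ = 1 := by
    rw [transpose_transpose]; exact mul_eq_one_comm.1 hW
  generalize Uᵀ * V = W at *
  have hrow : ∀ f : Fin n → ℝ, ∑ i, f i = ∑ i, ∑ j, (W i j) ^ 2 * f i := fun f =>
    Finset.sum_congr rfl fun i _ => by rw [← Finset.sum_mul, sum_sq_eq_one hW, one_mul]
  have hcol : ∀ f : Fin n → ℝ, ∑ j, f j = ∑ i, ∑ j, (W i j) ^ 2 * f j := fun f => by
    rw [Finset.sum_comm]
    refine Finset.sum_congr rfl fun j _ => ?_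
    have h1 : ∑ i, (W i j) ^ 2 = 1 := sum_sq_eq_one hW' j
    rw [← Finset.sum_mul, h1, one_mul]
  have hn : (n : ℝ) = ∑ i, ∑ j, (W i j) ^ 2 * 1 := by
    rw [← hrow (fun _ => 1)]; simp
  rw [hn, hrow (fun i => α i ^ 2), hcol (fun j => β j ^ 2), hrow (fun i => Real.log (α i)),
    hcol (fun j => Real.log (β j))]
  simp only [Finset.mul_sum, ← Finset.sum_add_distrib, ← Finset.sum_sub_distrib]
  refine Finset.sum_le_sum fun i _ => Finset.sum_le_sum fun j _ => ?_
  have h := mul_le_mul_of_nonneg_left (scalar_bound (ha i) (hb j) (haM i) (hbM j))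
    (sq_nonneg (W i j))
  linarith
end

section
/- Let Θ = [θ_inf, θ_sup] ⊂ ℝ with θ_inf < θ_0 < θ_sup. For each n ∈ ℕ, let (Ω_n, 𝔽_n, P_n) be a probability space, let c_n : Θ × Ω_n → ℝ be measurable in ω and twice continuously differentiable in θ for each ω, and let θ̂_n : Ω_n → Θ be measurable. Assume: (i) P_n(c_n(θ̂_n) = 0) → 1; (ii) θ̂_n → θ_0 in probability (∀ δ > 0, P_n(|θ̂_n − θ_0| > δ) → 0); (iii) √n · c_n(θ_0) converges in distribution to a centered Gaussian random variable with variance σ_1² ≥ 0; (iv) ∂c_n/∂θ(θ_0) converges in probability to a constant σ_2 > 0; (v) sup_{θ ∈ Θ} |∂²c_n/∂θ²(θ)| is bounded in probability (∀ δ > 0, ∃ M, N: ∀ n ≥ N, P_n(sup_{θ ∈ Θ} |∂²c_n/∂θ²(θ)| ≥ M) ≤ δ). Then √n · (θ̂_n − θ_0) converges in distribution to a centered Gaussian random variable with variance σ_1²/σ_2². -/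
/-!
At a root `θ̂` of `cₙ`, the mean value inequality applied to `cₙ(θ) - σ₂ θ` between `θ₀` and `θ̂`
gives `|cₙ(θ₀) + σ₂ (θ̂ - θ₀)| ≤ η |θ̂ - θ₀|` as soon as `|c'ₙ - σ₂| ≤ η` there. The latter holds
with probability close to one: `c'ₙ(θ₀)` is close to `σ₂`, and `c'ₙ` is Lipschitz with a constant
bounded in probability while `θ̂ - θ₀` is small. For `η ≤ σ₂ / 2` this yields
`|θ̂ - θ₀ + cₙ(θ₀) / σ₂| ≤ 2 η |cₙ(θ₀)| / σ₂²` (`abs_sub_add_div_le_of_root`). Since `√n cₙ(θ₀)` is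
tight (`exists_eventually_measure_abs_gt_le`), `√n (θ̂ - θ₀)` and `-√n cₙ(θ₀) / σ₂` differ by a
quantity tending to `0` in probability. The second converges in law to `N(0, s₁ / σ₂²)`, hence so
does the first, by Slutsky's theorem (`tendsto_integral_of_sub_tendsto_zero`).
-/

open MeasureTheory ProbabilityTheory Filter

/-- Slutsky's theorem for variables living on different probability spaces: if the laws of `X n`
converge weakly to `ν` and `Y n - X n → 0` in probability, so do the laws of `Y n`. Mathlib's
version has a single probability space; the product of all the `Ω n` provides one. -/
theorem tendsto_integral_of_sub_tendsto_zero {Ω : ℕ → Type} [∀ n, MeasurableSpace (Ω n)]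
    (P : (n : ℕ) → Measure (Ω n)) [∀ n, IsProbabilityMeasure (P n)]
    (X Y : (n : ℕ) → Ω n → ℝ) (hX : ∀ n, Measurable (X n)) (hY : ∀ n, Measurable (Y n))
    (ν : Measure ℝ) [IsProbabilityMeasure ν]
    (hlim : ∀ f : BoundedContinuousFunction ℝ ℝ,
      Tendsto (fun n => ∫ ω, f (X n ω) ∂(P n)) atTop (nhds (∫ x, f x ∂ν)))
    (hsub : ∀ ε : ℝ, 0 < ε →
      Tendsto (fun n => P n {ω | ε ≤ |Y n ω - X n ω|}) atTop (nhds 0))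
    (f : BoundedContinuousFunction ℝ ℝ) :
    Tendsto (fun n => ∫ ω, f (Y n ω) ∂(P n)) atTop (nhds (∫ x, f x ∂ν)) := by
  let Q := Measure.infinitePi P
  have hmp (n : ℕ) : MeasurePreserving (Function.eval n) Q (P n) :=
    measurePreserving_eval_infinitePi P n
  have hZmap (g : BoundedContinuousFunction ℝ ℝ) (Z : (n : ℕ) → Ω n → ℝ)
      (hZ : ∀ n, Measurable (Z n)) (n : ℕ) :
      ∫ x, g x ∂(Q.map fun ω => Z n (ω n)) = ∫ ω, g (Z n ω) ∂(P n) := by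
    have hZn : Measurable fun ω : (n : ℕ) → Ω n => Z n (ω n) :=
      (hZ n).comp (measurable_pi_apply n)
    rw [integral_map hZn.aemeasurable
      g.continuous.aestronglyMeasurable, ← (hmp n).map_eq,
      integral_map (hmp n).measurable.aemeasurable
        (f := fun ω => g (Z n ω)) (g.continuous.measurable.comp (hZ n)).aestronglyMeasurable]
  have hXd : TendstoInDistribution (fun n (ω : (n : ℕ) → Ω n) => X n (ω n)) atTop
      (id : ℝ → ℝ) (fun _ => Q) ν := by
    refine ⟨fun n => ((hX n).comp (measurable_pi_apply n)).aemeasurable,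
      aemeasurable_id, ?_⟩
    refine ProbabilityMeasure.tendsto_iff_forall_integral_tendsto.2 fun g => ?_
    simpa [hZmap g X hX] using hlim g
  have hYd := tendstoInDistribution_of_tendstoInMeasure_sub
    (fun n (ω : (n : ℕ) → Ω n) => Y n (ω n)) id hXd
    (by
      rw [tendstoInMeasure_iff_norm]
      intro ε hε
      refine (hsub ε hε).congr fun n => ?_
      have hset : MeasurableSet {ω | ε ≤ |Y n ω - X n ω|} :=
        measurableSet_le measurable_const ((hY n).sub (hX n)).abs
      rw [← (hmp n).measure_preimage hset.nullMeasurableSet]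
      simp [Set.preimage, Real.norm_eq_abs])
    (fun n => ((hY n).comp (measurable_pi_apply n)).aemeasurable)
  have := ProbabilityMeasure.tendsto_iff_forall_integral_tendsto.1 hYd.tendsto f
  simpa [hZmap f Y hY] using this

/-- Tightness at infinity of a sequence whose laws converge weakly, by the portmanteau theorem. -/
theorem exists_eventually_measure_abs_gt_le {Ω : ℕ → Type} [∀ n, MeasurableSpace (Ω n)]
    (P : (n : ℕ) → Measure (Ω n)) [∀ n, IsProbabilityMeasure (P n)]
    (X : (n : ℕ) → Ω n → ℝ) (hX : ∀ n, Measurable (X n))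
    (ν : Measure ℝ) [IsProbabilityMeasure ν]
    (hlim : ∀ f : BoundedContinuousFunction ℝ ℝ,
      Tendsto (fun n => ∫ ω, f (X n ω) ∂(P n)) atTop (nhds (∫ x, f x ∂ν)))
    {e : ENNReal} (he : 0 < e) :
    ∃ K : ℝ, 0 < K ∧ ∀ᶠ n in atTop, P n {ω | K < |X n ω|} ≤ e := by
  have hν := tendsto_measure_compl_closedBall_of_isTightMeasureSet
    (isTightMeasureSet_singleton (μ := ν)) 0
  simp only [Set.mem_singleton_iff, iSup_iSup_eq_left] at hν
  obtain ⟨r, hr, hr0⟩ := ((hν.eventually (gt_mem_nhds he)).and (eventually_ge_atTop 0)).exists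
  refine ⟨r + 1, by linarith, ?_⟩
  have hd : Tendsto (β := ProbabilityMeasure ℝ)
      (fun n => ⟨(P n).map (X n), Measure.isProbabilityMeasure_map (hX n).aemeasurable⟩)
      atTop (nhds ⟨ν, inferInstance⟩) := by
    refine ProbabilityMeasure.tendsto_iff_forall_integral_tendsto.2 fun g => ?_
    refine (hlim g).congr fun n => ?_
    simp [integral_map (hX n).aemeasurable g.continuous.aestronglyMeasurable]
  have hF : IsClosed {x : ℝ | r + 1 ≤ |x|} := isClosed_le continuous_const continuous_abs
  have hsup := ProbabilityMeasure.limsup_measure_closed_le_of_tendsto hd hF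
  have hlt := eventually_lt_of_limsup_lt (hsup.trans_lt ((measure_mono (by
    intro x hx
    simp at hx ⊢
    linarith)).trans_lt hr))
  filter_upwards [hlt] with n hn
  rw [ProbabilityMeasure.coe_mk, Measure.map_apply (hX n) hF.measurableSet] at hn
  exact (measure_mono fun ω (hω : r + 1 < |X n ω|) => hω.le).trans hn.le

/-- The deterministic linearisation: if `c'` is within `η ≤ σ / 2` of `σ` between `x` and a root
`y` of `c`, which is ensured by the bounds on `c' x`, `c''` and `y - x`, then `y - x` agrees
with `-c x / σ` up to a relative error of order `η`. -/
theorem abs_sub_add_div_le_of_root {a b x y σ M η : ℝ} {c c' c'' : ℝ → ℝ}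
    (h1 : ∀ θ ∈ Set.Icc a b, HasDerivWithinAt c (c' θ) (Set.Icc a b) θ)
    (h2 : ∀ θ ∈ Set.Icc a b, HasDerivWithinAt c' (c'' θ) (Set.Icc a b) θ)
    (hM : ∀ θ ∈ Set.Icc a b, |c'' θ| ≤ M)
    (hx : x ∈ Set.Icc a b) (hy : y ∈ Set.Icc a b) (hσ : 0 < σ) (hησ : η ≤ σ / 2)
    (hc' : |c' x - σ| ≤ η / 2) (hyx : M * |y - x| ≤ η / 2) (hroot : c y = 0) :
    |(y - x) + c x / σ| ≤ 2 * η / σ ^ 2 * |c x| := by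
  have hM0 : 0 ≤ M := (abs_nonneg _).trans (hM x hx)
  have hη0 : 0 ≤ η := by linarith [abs_nonneg (c' x - σ)]
  have hsub : Set.uIcc x y ⊆ Set.Icc a b := Set.uIcc_subset_Icc hx hy
  have hbound : ∀ θ ∈ Set.uIcc x y, ‖c' θ - σ‖ ≤ η := by
    intro θ hθ
    have := (convex_Icc a b).norm_image_sub_le_of_norm_hasDerivWithin_le h2 hM hx (hsub hθ)
    have hθx : |θ - x| ≤ |y - x| := Set.abs_sub_left_of_mem_uIcc hθ
    have h3 := mul_le_mul_of_nonneg_left hθx hM0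
    rw [Real.norm_eq_abs] at this ⊢
    rw [Real.norm_eq_abs] at this
    have h4 := abs_add_le (c' θ - c' x) (c' x - σ)
    rw [sub_add_sub_cancel] at h4
    linarith
  -- mean value inequality for `c θ - σ * θ`, which avoids an intermediate point
  have key := (convex_uIcc x y).norm_image_sub_le_of_norm_hasDerivWithin_le
    (f := fun θ => c θ - σ * θ) (f' := fun θ => c' θ - σ)
    (fun θ hθ => ((h1 θ (hsub hθ)).mono hsub).sub
      (by simpa using (hasDerivWithinAt_id θ (Set.uIcc x y)).const_mul σ)) hbound
    Set.left_mem_uIcc Set.right_mem_uIcc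
  simp only [Real.norm_eq_abs, hroot] at key
  have e1 : |0 - σ * y - (c x - σ * x)| = |c x + σ * (y - x)| := by
    rw [← abs_neg]; ring_nf
  rw [e1] at key
  have e2 : σ * |y - x| ≤ |c x + σ * (y - x)| + |c x| := by
    have := abs_sub (c x + σ * (y - x)) (c x)
    rw [add_sub_cancel_left, abs_mul, abs_of_pos hσ] at this
    exact this
  have e3 : |y - x| ≤ 2 * |c x| / σ := by
    rw [le_div_iff₀ hσ]
    nlinarith [abs_nonneg (y - x)]
  have e4 : (y - x) + c x / σ = (c x + σ * (y - x)) / σ := by field_simp; ring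
  rw [e4, abs_div, abs_of_pos hσ, div_le_iff₀ hσ]
  calc _ ≤ η * |y - x| := key
    _ ≤ η * (2 * |c x| / σ) := by gcongr
    _ = _ := by field_simp

/-- The criterion is a Carathéodory function (continuous in `θ`, measurable in `ω`), so its value at
a measurable random parameter is measurable. -/
theorem measurable_criterion_at_estimator {Ω : Type*} [MeasurableSpace Ω]
    {a b : ℝ} {c c' : ℝ → Ω → ℝ}
    (hmeas : ∀ θ, Measurable (c θ))
    (hder : ∀ ω, ∀ θ ∈ Set.Icc a b,
      HasDerivWithinAt (fun t => c t ω) (c' θ ω) (Set.Icc a b) θ)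
    {t : Ω → ℝ} (ht : Measurable t) (hmem : ∀ ω, t ω ∈ Set.Icc a b) :
    Measurable fun ω => c (t ω) ω := by
  have hu := measurable_uncurry_of_continuous_of_measurable
    (u := fun (θ : Set.Icc a b) ω => c θ ω)
    (fun ω => continuousOn_iff_continuous_domRestrict.1
      fun θ hθ => (hder ω θ hθ).continuousWithinAt) (fun θ => hmeas θ)
  exact hu.comp ((ht.subtype_mk (h := hmem)).prodMk measurable_id)

/-- Proposition D.9 of the paper (asymptotic normality of `M`-estimators, scalar
parameter): let `Θ = [θinf, θsup]` with `θinf < θ₀ < θsup`, let `cₙ(θ, ω)` be a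
criterion, measurable in `ω` and twice continuously differentiable in `θ`
(with derivatives `c'ₙ`, `c''ₙ` within `Θ`), and let `θ̂ₙ` be `Θ`-valued estimators.
Assume (i) `Pₙ(cₙ(θ̂ₙ) = 0) → 1`; (ii) `θ̂ₙ → θ₀` in probability;
(iii) `√n cₙ(θ₀) →d N(0, s₁)`; (iv) `c'ₙ(θ₀) → σ₂ > 0` in probability;
(v) `sup_θ |c''ₙ(θ)|` is bounded in probability.
Then `√n (θ̂ₙ - θ₀) →d N(0, s₁ / σ₂²)`. -/
theorem stmt14 (θinf θsup θ₀ : ℝ) (h0 : θinf < θ₀) (h1 : θ₀ < θsup)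
    (Ω : ℕ → Type) [∀ n, MeasurableSpace (Ω n)]
    (P : (n : ℕ) → Measure (Ω n)) [∀ n, IsProbabilityMeasure (P n)]
    (c c' c'' : (n : ℕ) → ℝ → Ω n → ℝ)
    (hmeas : ∀ n θ, Measurable (c n θ))
    (hder1 : ∀ n (ω : Ω n), ∀ θ ∈ Set.Icc θinf θsup,
      HasDerivWithinAt (fun t => c n t ω) (c' n θ ω) (Set.Icc θinf θsup) θ)
    (hder2 : ∀ n (ω : Ω n), ∀ θ ∈ Set.Icc θinf θsup,
      HasDerivWithinAt (fun t => c' n t ω) (c'' n θ ω) (Set.Icc θinf θsup) θ)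
    (hcont2 : ∀ n (ω : Ω n), ContinuousOn (fun t => c'' n t ω) (Set.Icc θinf θsup))
    (θhat : (n : ℕ) → Ω n → ℝ)
    (hθhatmeas : ∀ n, Measurable (θhat n))
    (hθhatmem : ∀ n ω, θhat n ω ∈ Set.Icc θinf θsup)
    -- (i) `Pₙ(cₙ(θ̂ₙ) = 0) → 1`
    (hroot : Tendsto (fun n => P n {ω | c n (θhat n ω) ω = 0}) atTop (nhds 1))
    -- (ii) consistency of `θ̂ₙ`
    (hconsist : ∀ δ : ℝ, 0 < δ →
      Tendsto (fun n => P n {ω | δ < |θhat n ω - θ₀|}) atTop (nhds 0))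
    (s₁ : NNReal) (σ₂ : ℝ) (hσ₂ : 0 < σ₂)
    -- (iii) `√n cₙ(θ₀)` converges in distribution to `N(0, s₁)`
    (hclt : ∀ f : BoundedContinuousFunction ℝ ℝ,
      Tendsto (fun n : ℕ => ∫ ω, f (Real.sqrt n * c n θ₀ ω) ∂(P n)) atTop
        (nhds (∫ x, f x ∂(gaussianReal 0 s₁))))
    -- (iv) `c'ₙ(θ₀) → σ₂` in probability
    (hderconv : ∀ δ : ℝ, 0 < δ →
      Tendsto (fun n => P n {ω | δ < |c' n θ₀ ω - σ₂|}) atTop (nhds 0))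
    -- (v) `sup_θ |c''ₙ(θ)|` bounded in probability
    (hbdd : ∀ δ : ℝ, 0 < δ → ∃ (M : ℝ) (N : ℕ), ∀ n ≥ N,
      P n {ω | ∃ θ ∈ Set.Icc θinf θsup, M ≤ |c'' n θ ω|} ≤ ENNReal.ofReal δ) :
    ∀ f : BoundedContinuousFunction ℝ ℝ,
      Tendsto (fun n : ℕ => ∫ ω, f (Real.sqrt n * (θhat n ω - θ₀)) ∂(P n)) atTop
        (nhds (∫ x, f x ∂(gaussianReal 0 (s₁ / (σ₂ ^ 2).toNNReal)))) := by
  intro f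
  have hXm (n : ℕ) : Measurable fun ω => Real.sqrt n * c n θ₀ ω := (hmeas n θ₀).const_mul _
  refine tendsto_integral_of_sub_tendsto_zero P (fun n ω => -(Real.sqrt n * c n θ₀ ω) / σ₂) _
    (fun n => (hXm n).neg.div_const σ₂) (fun n => ((hθhatmeas n).sub_const θ₀).const_mul _)
    _ ?_ ?_ f
  · intro g
    -- the reflection is harmless because the limit law is symmetric
    let h : C(ℝ, ℝ) := ⟨fun x => -x / σ₂, by fun_prop⟩
    have hmap : (gaussianReal 0 s₁).map h = gaussianReal 0 (s₁ / (σ₂ ^ 2).toNNReal) := by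
      have h1 : (h : ℝ → ℝ) = (fun x => x / σ₂) ∘ (fun x => -x) := rfl
      rw [h1, ← Measure.map_map (by fun_prop) (by fun_prop), gaussianReal_map_neg,
        gaussianReal_map_div_const, neg_zero, zero_div]
      congr 2
      exact (Real.toNNReal_of_nonneg (sq_nonneg σ₂)).symm
    rw [← hmap, integral_map h.continuous.aemeasurable g.continuous.aestronglyMeasurable]
    exact hclt (g.compContinuous h)
  · intro ε hε
    rw [ENNReal.tendsto_nhds_zero]
    intro e he
    have he5 : 0 < e / 5 := ENNReal.div_pos he.ne' (by simp)
    obtain ⟨K, hK, hKn⟩ := exists_eventually_measure_abs_gt_le P _ hXm _ hclt he5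
    obtain ⟨d, hd0, hde⟩ : ∃ d : ℝ, 0 < d ∧ ENNReal.ofReal d ≤ e / 5 := by
      refine ⟨(min (e / 5) 1).toReal, ENNReal.toReal_pos (by simp [he5.ne']) (by simp), ?_⟩
      rw [ENNReal.ofReal_toReal (by simp)]
      exact min_le_left _ _
    obtain ⟨M, N, hMN⟩ := hbdd d hd0
    -- `η` is chosen so that `2 * η / σ₂ ^ 2 * K < ε`
    let η : ℝ := min (σ₂ / 2) (ε * σ₂ ^ 2 / (4 * K))
    have hη : 0 < η := by positivity
    have hηε : 2 * η / σ₂ ^ 2 * K < ε := by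
      have h1 : η ≤ ε * σ₂ ^ 2 / (4 * K) := min_le_right _ _
      calc 2 * η / σ₂ ^ 2 * K ≤ 2 * (ε * σ₂ ^ 2 / (4 * K)) / σ₂ ^ 2 * K := by gcongr
        _ = ε / 2 := by field_simp; norm_num
        _ < ε := by linarith
    -- measurability of the root event is what makes its complement asymptotically null
    have hroot' : Tendsto (fun n => P n {ω | c n (θhat n ω) ω = 0}ᶜ) atTop (nhds 0) := by
      have hlim := ENNReal.Tendsto.sub (tendsto_const_nhds (x := (1 : ENNReal))) hroot
        (Or.inl (by simp))
      rw [tsub_self] at hlim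
      refine hlim.congr fun n => ?_
      refine (prob_compl_eq_one_sub ?_).symm
      exact measurable_criterion_at_estimator (hmeas n) (hder1 n) (hθhatmeas n) (hθhatmem n)
        (measurableSet_singleton 0)
    -- `|M|` since `M` may be negative; on the good event it is automatically positive
    let τ : ℝ := η / (2 * (|M| + 1))
    have hτ : 0 < τ := by positivity
    filter_upwards [eventually_ge_atTop N, hKn,
      ENNReal.tendsto_nhds_zero.1 hroot' _ he5,
      ENNReal.tendsto_nhds_zero.1 (hconsist τ hτ) _ he5,
      ENNReal.tendsto_nhds_zero.1 (hderconv (η / 2) (half_pos hη)) _ he5]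
      with n hn hB1 hB2 hB3 hB4
    have hB5 := (hMN n hn).trans hde
    have hincl : {ω | ε ≤ |Real.sqrt n * (θhat n ω - θ₀) - -(Real.sqrt n * c n θ₀ ω) / σ₂|} ⊆
        {ω | K < |Real.sqrt n * c n θ₀ ω|} ∪ {ω | c n (θhat n ω) ω = 0}ᶜ ∪
        {ω | τ < |θhat n ω - θ₀|} ∪ {ω | η / 2 < |c' n θ₀ ω - σ₂|} ∪
        {ω | ∃ θ ∈ Set.Icc θinf θsup, M ≤ |c'' n θ ω|} := by
      intro ω hω
      by_contra hgood
      simp only [Set.mem_union, Set.mem_compl_iff, Set.mem_ofPred_eq, not_or, not_lt, not_not,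
        not_exists, not_and, not_le] at hgood
      obtain ⟨⟨⟨⟨g1, g2⟩, g3⟩, g4⟩, g5⟩ := hgood
      have hMτ : |M| * |θhat n ω - θ₀| ≤ η / 2 := by
        calc |M| * |θhat n ω - θ₀| ≤ (|M| + 1) * τ := by gcongr; linarith
          _ = η / 2 := by simp only [τ]; field_simp
      have hdet := abs_sub_add_div_le_of_root (c := fun t => c n t ω) (hder1 n ω) (hder2 n ω)
        (fun θ hθ => (g5 θ hθ).le.trans (le_abs_self M)) ⟨h0.le, h1.le⟩ (hθhatmem n ω) hσ₂
        (min_le_left _ _) g4 hMτ g2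
      have hs : 0 ≤ Real.sqrt n := Real.sqrt_nonneg _
      have : |Real.sqrt n * (θhat n ω - θ₀) - -(Real.sqrt n * c n θ₀ ω) / σ₂| < ε := by
        calc |Real.sqrt n * (θhat n ω - θ₀) - -(Real.sqrt n * c n θ₀ ω) / σ₂|
            = Real.sqrt n * |(θhat n ω - θ₀) + c n θ₀ ω / σ₂| := by
              conv_rhs => rw [← abs_of_nonneg hs, ← abs_mul]
              congr 1
              ring
          _ ≤ Real.sqrt n * (2 * η / σ₂ ^ 2 * |c n θ₀ ω|) := by gcongr
          _ = 2 * η / σ₂ ^ 2 * |Real.sqrt n * c n θ₀ ω| := by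
              rw [abs_mul, abs_of_nonneg hs]; ring
          _ ≤ 2 * η / σ₂ ^ 2 * K := by gcongr
          _ < ε := hηε
      exact absurd hω (not_le.2 this)
    calc _ ≤ _ := measure_mono hincl
      _ ≤ e / 5 + e / 5 + e / 5 + e / 5 + e / 5 := by
        refine (measure_union_le _ _).trans (add_le_add ?_ hB5)
        refine (measure_union_le _ _).trans (add_le_add ?_ hB4)
        refine (measure_union_le _ _).trans (add_le_add ?_ hB3)
        exact (measure_union_le _ _).trans (add_le_add hB1 hB2)
      _ = 5 * (e / 5) := by ring
      _ = e := ENNReal.mul_div_cancel (by simp) (by simp)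
end

section
/- Let d ≥ 1 and let v : ℕ* → ℕ^d be a sequence of points such that for every N ∈ ℕ*, {v_i : 1 ≤ i ≤ N^d} = {1, …, N}^d. Let g : ℤ^d → ℝ satisfy |g(u)| ≤ C/(1 + ‖u‖_∞^{d+1}) for all u ∈ ℤ^d, for some constant C < ∞. Then (1/n) Σ_{i=1}^n Σ_{j=1}^n g(v_i − v_j)² converges, as n → ∞, to Σ_{u ∈ ℤ^d} g(u)² (a convergent sum of nonnegative terms). -/
open Filter

/-!
Grouping the pairs `(i, j)` by the difference `u = vᵢ - vⱼ` turns the normalized double sum into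
`∑' u, (c n u / n) * g u ^ 2`, where `c n u` counts the pairs with `i, j ≤ n` and difference `u`
(`doubleSum_eq_tsum`). The points `v₁, v₂, …` are distinct, since `N ^ d` of them fill a cube with
`N ^ d` elements (`injOn_Ici_one`); hence `j` determines `i`, and `c n u ≤ n` (`diffCount_le`).
On the other hand, if `N ^ d ≤ n` and `|u k| ≤ m` for all `k`, then every `x` in the smaller cube
`{m+1,…,N-m}^d` has both `x` and `x - u` among the first `n` points, so `c n u ≥ (N - 2m) ^ d`
(`le_diffCount`). With `N = ⌊n ^ (1/d)⌋` this gives `c n u / n → 1` for each fixed `u`. The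
decay of `g` makes `g ^ 2` summable by comparison with the lattice sum `∑ ‖u‖⁻¹ ^ (d + 1)`, and
dominated convergence for series, with dominating function `g ^ 2`, concludes.
-/

/-- The number of pairs `(i, j)` with `1 ≤ i, j ≤ n` and `v i - v j = u`. -/
def diffCount {d : ℕ} (v : ℕ → Fin d → ℕ) (n : ℕ) (u : Fin d → ℤ) : ℕ :=
  ((Finset.Icc 1 n ×ˢ Finset.Icc 1 n).filter
    fun p => (fun k => (v p.1 k : ℤ) - (v p.2 k : ℤ)) = u).card

lemma doubleSum_eq_tsum {d : ℕ} (v : ℕ → Fin d → ℕ) (n : ℕ) (G : (Fin d → ℤ) → ℝ) :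
    ∑ i ∈ Finset.Icc 1 n, ∑ j ∈ Finset.Icc 1 n, G (fun k => (v i k : ℤ) - (v j k : ℤ))
      = ∑' u, (diffCount v n u : ℝ) * G u := by
  classical
  set w : ℕ × ℕ → (Fin d → ℤ) := fun p k => (v p.1 k : ℤ) - (v p.2 k : ℤ) with hw
  rw [← Finset.sum_product (Finset.Icc 1 n) (Finset.Icc 1 n) (fun p => G (w p)),
    Finset.sum_comp G w, tsum_eq_sum (s := (Finset.Icc 1 n ×ˢ Finset.Icc 1 n).image w)]
  · simp [diffCount, hw]
  · intro u hu
    have : diffCount v n u = 0 := by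
      rw [diffCount, Finset.card_eq_zero, Finset.filter_eq_empty_iff]
      intro p hp h
      exact hu (Finset.mem_image.2 ⟨p, hp, h⟩)
    simp [this]

section Enumeration

variable {d : ℕ} {v : ℕ → Fin d → ℕ}

lemma injOn_Ici_one (hd : 1 ≤ d)
    (hv : ∀ N : ℕ, 1 ≤ N →
      v '' (Set.Icc 1 (N ^ d)) = Set.pi Set.univ fun _ : Fin d => Set.Icc 1 N) :
    Set.InjOn v (Set.Ici 1) := by
  classical
  have key : ∀ N : ℕ, 1 ≤ N → Set.InjOn v (Set.Icc 1 (N ^ d)) := by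
    intro N hN
    have h : (Finset.Icc 1 (N ^ d)).image v = Fintype.piFinset fun _ : Fin d => Finset.Icc 1 N := by
      apply Finset.coe_injective
      simpa using hv N hN
    have h2 : Set.InjOn v (Finset.Icc 1 (N ^ d) : Finset ℕ) := by
      apply Finset.injOn_of_card_image_eq
      simp [h]
    simpa using h2
  intro i hi j hj hij
  have hi : 1 ≤ i := hi
  have hj : 1 ≤ j := hj
  have hle : max i j ≤ max i j ^ d := Nat.le_self_pow (by omega) _
  exact key (max i j) (by omega) ⟨hi, by omega⟩ ⟨hj, by omega⟩ hij

lemma diffCount_le (hinj : Set.InjOn v (Set.Ici 1)) (n : ℕ) (u : Fin d → ℤ) :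
    diffCount v n u ≤ n := by
  rw [diffCount]
  calc _ ≤ (Finset.Icc 1 n).card := by
        apply Finset.card_le_card_of_injOn Prod.snd
        · intro p hp
          simp at hp ⊢
          omega
        · rintro ⟨i, j⟩ hp ⟨i', j'⟩ hp' (rfl : j = j')
          simp at hp hp'
          have : v i = v i' := by
            funext k
            have h1 := congrFun hp.2 k
            have h2 := congrFun hp'.2 k
            omega
          rw [hinj (Set.mem_Ici.2 (by omega)) (Set.mem_Ici.2 (by omega)) this]
    _ = n := by simp

lemma le_diffCount
    (hv : ∀ N : ℕ, 1 ≤ N →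
      v '' (Set.Icc 1 (N ^ d)) = Set.pi Set.univ fun _ : Fin d => Set.Icc 1 N)
    {N n m : ℕ} (hN : 1 ≤ N) (hn : N ^ d ≤ n) {u : Fin d → ℤ} (hu : ∀ k, |u k| ≤ m) :
    (N - 2 * m) ^ d ≤ diffCount v n u := by
  classical
  have hcard : (Fintype.piFinset fun _ : Fin d => Finset.Icc (m + 1) (N - m)).card
      = (N - 2 * m) ^ d := by
    simp only [Fintype.card_piFinset_const, Nat.card_Icc]
    congr 1
    omega
  rw [← hcard, diffCount]
  apply Finset.card_le_card_of_surjOn (fun p => v p.1)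
  intro x hx
  simp only [Finset.mem_coe, Fintype.mem_piFinset, Finset.mem_Icc] at hx
  have hmem : ∀ y : Fin d → ℕ, (∀ k, 1 ≤ y k ∧ y k ≤ N) → ∃ i, (1 ≤ i ∧ i ≤ n) ∧ v i = y := by
    intro y hy
    have : y ∈ v '' Set.Icc 1 (N ^ d) := by
      rw [hv N hN]
      exact fun k _ => hy k
    obtain ⟨i, hi, rfl⟩ := this
    exact ⟨i, ⟨hi.1, hi.2.trans hn⟩, rfl⟩
  obtain ⟨i, hi, hix⟩ := hmem x fun k => by have := hx k; omega
  obtain ⟨j, hj, hjx⟩ := hmem (fun k => ((x k : ℤ) - u k).toNat) fun k => by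
    have := hx k
    have := abs_le.1 (hu k)
    omega
  refine ⟨(i, j), ?_, hix⟩
  simp only [Finset.coe_filter, Finset.mem_product, Finset.mem_Icc, Set.mem_ofPred_eq]
  refine ⟨⟨hi, hj⟩, ?_⟩
  funext k
  have := hx k
  have := abs_le.1 (hu k)
  rw [hix, hjx]
  simp only
  omega

lemma tendsto_diffCount_div (hd : 1 ≤ d)
    (hv : ∀ N : ℕ, 1 ≤ N →
      v '' (Set.Icc 1 (N ^ d)) = Set.pi Set.univ fun _ : Fin d => Set.Icc 1 N)
    (u : Fin d → ℤ) :
    Tendsto (fun n : ℕ => (diffCount v n u : ℝ) / n) atTop (nhds 1) := by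
  obtain ⟨m, hm⟩ : ∃ m : ℕ, ∀ k, |u k| ≤ m := by
    refine ⟨∑ k, (u k).natAbs, fun k => ?_⟩
    have := Finset.single_le_sum (f := fun k => (u k).natAbs) (fun _ _ => Nat.zero_le _)
      (Finset.mem_univ k)
    rw [Int.abs_eq_natAbs]
    exact_mod_cast this
  have hx : Tendsto (fun n : ℕ => (n : ℝ) ^ (1 / (d : ℝ))) atTop atTop :=
    (tendsto_rpow_atTop (by positivity)).comp tendsto_natCast_atTop_atTop
  have hlow : Tendsto (fun n : ℕ => (1 - (1 + 2 * m : ℝ) / (n : ℝ) ^ (1 / (d : ℝ))) ^ d)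
      atTop (nhds 1) := by
    have := ((hx.const_div_atTop (1 + 2 * m : ℝ)).const_sub 1).pow d
    simpa using this
  refine tendsto_of_tendsto_of_tendsto_of_le_of_le' hlow tendsto_const_nhds ?_ ?_
  · filter_upwards [hx.eventually_ge_atTop (1 + 2 * m : ℝ)] with n hn
    set x : ℝ := (n : ℝ) ^ (1 / (d : ℝ)) with hxdef
    have hx1 : 1 ≤ x := le_trans (by linarith [(Nat.cast_nonneg m : (0 : ℝ) ≤ m)]) hn
    have hxd : x ^ d = n := by
      rw [hxdef, one_div, Real.rpow_inv_natCast_pow (Nat.cast_nonneg n) (by omega)]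
    have hfl : (⌊x⌋₊ : ℝ) ≤ x := Nat.floor_le (by linarith)
    have hN : 1 ≤ ⌊x⌋₊ := Nat.le_floor (by simpa using hx1)
    have hNn : ⌊x⌋₊ ^ d ≤ n := by
      have : (⌊x⌋₊ : ℝ) ^ d ≤ n := hxd ▸ pow_le_pow_left₀ (by positivity) hfl d
      exact_mod_cast this
    have hc := le_diffCount hv hN hNn hm
    have hc' : (((⌊x⌋₊ - 2 * m : ℕ) : ℝ)) ^ d ≤ diffCount v n u := by exact_mod_cast hc
    have hsub : x - (1 + 2 * m) ≤ ((⌊x⌋₊ - 2 * m : ℕ) : ℝ) := by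
      have h1 : (⌊x⌋₊ : ℝ) ≤ ((⌊x⌋₊ - 2 * m : ℕ) : ℝ) + 2 * m := by
        exact_mod_cast (by omega : ⌊x⌋₊ ≤ (⌊x⌋₊ - 2 * m) + 2 * m)
      linarith [Nat.lt_floor_add_one x]
    have hx0 : x ≠ 0 := by linarith
    rw [one_sub_div hx0, div_pow, hxd]
    gcongr
    exact (pow_le_pow_left₀ (by linarith) hsub d).trans hc'
  · filter_upwards with n
    exact div_le_one_of_le₀ (by exact_mod_cast diffCount_le (injOn_Ici_one hd hv) n u)
      (Nat.cast_nonneg n)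

end Enumeration

/-- Comparison lattice sum: `ℤ^d` embeds as a rank-`d` lattice in `ℝ^d` with the sup norm. -/
lemma summable_norm_inv_pow (d : ℕ) :
    Summable fun u : Fin d → ℤ => ‖fun k => ((u k : ℝ))‖⁻¹ ^ (d + 1) := by
  let b := Pi.basisFun ℝ (Fin d)
  let L : Submodule ℤ (Fin d → ℝ) := Submodule.span ℤ (Set.range b)
  have hrank : Module.finrank ℤ L = d := by
    rw [ZLattice.rank ℝ L]
    simp
  have hmem : ∀ u : Fin d → ℤ, (fun k => (u k : ℝ)) ∈ L := by
    intro u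
    rw [Module.Basis.mem_span_iff_repr_mem ℤ b]
    intro k
    exact ⟨u k, by simp [b]⟩
  have hs := ZLattice.summable_norm_pow_inv L (d + 1) (by omega)
  let f : (Fin d → ℤ) → L := fun u => ⟨fun k => (u k : ℝ), hmem u⟩
  have hf : Function.Injective f := by
    intro u u' h
    funext k
    have : (u k : ℝ) = u' k := congrFun (congrArg Subtype.val h) k
    exact_mod_cast this
  have hnorm : ∀ u, ‖f u‖ = ‖fun k => ((u k : ℝ))‖ := fun u => Submodule.coe_norm _
  refine (hs.comp_injective hf).congr fun u => ?_
  rw [Function.comp_apply, hnorm]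

lemma summable_sq_of_decay {d : ℕ} {g : (Fin d → ℤ) → ℝ} {C : ℝ}
    (hg : ∀ u : Fin d → ℤ, |g u| ≤ C / (1 + ‖fun k => ((u k : ℝ))‖ ^ (d + 1))) :
    Summable fun u => g u ^ 2 := by
  refine Summable.of_norm_bounded_eventually ((summable_norm_inv_pow d).mul_left (C ^ 2)) ?_
  -- The comparison function vanishes at `0`, so the bound is only claimed off `{0}`.
  refine (Set.finite_singleton (0 : Fin d → ℤ)).subset fun u hu => ?_
  by_contra h0
  apply hu
  change ‖g u ^ 2‖ ≤ C ^ 2 * ‖fun k => ((u k : ℝ))‖⁻¹ ^ (d + 1)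
  have hpos : 0 < ‖fun k => ((u k : ℝ))‖ := by
    rw [norm_pos_iff]
    intro h
    exact h0 (funext fun k => by simpa using congrFun h k)
  set t := ‖fun k => ((u k : ℝ))‖ ^ (d + 1) with ht
  have htpos : 0 < t := by positivity
  rw [Real.norm_eq_abs, abs_of_nonneg (sq_nonneg _), inv_pow, ← ht, ← sq_abs]
  calc |g u| ^ 2 ≤ (C / (1 + t)) ^ 2 := pow_le_pow_left₀ (abs_nonneg _) (hg u) 2
    _ = C ^ 2 / (1 + t) ^ 2 := div_pow _ _ _
    _ ≤ C ^ 2 / t := by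
        gcongr
        nlinarith
    _ = C ^ 2 * t⁻¹ := div_eq_mul_inv _ _

/-- Convergence of the normalized double sum on the regular grid: if `v` enumerates
`(ℕ*)^d` cube by cube (`{vᵢ : 1 ≤ i ≤ N^d} = {1,…,N}^d` for all `N`) and
`|g(u)| ≤ C/(1+‖u‖_∞^(d+1))`, then `(1/n) Σ_{i=1}^n Σ_{j=1}^n g(vᵢ - vⱼ)²` converges
to `Σ_{u ∈ ℤ^d} g(u)²`. -/
theorem stmt15 (d : ℕ) (hd : 1 ≤ d) (v : ℕ → Fin d → ℕ)
    (hv : ∀ N : ℕ, 1 ≤ N →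
      v '' (Set.Icc 1 (N ^ d)) = Set.pi Set.univ fun _ : Fin d => Set.Icc 1 N)
    (g : (Fin d → ℤ) → ℝ) (C : ℝ)
    (hg : ∀ u : Fin d → ℤ, |g u| ≤ C / (1 + ‖fun k => ((u k : ℝ))‖ ^ (d + 1))) :
    Tendsto (fun n : ℕ => (1 / (n : ℝ)) *
        ∑ i ∈ Finset.Icc 1 n, ∑ j ∈ Finset.Icc 1 n,
          (g fun k => (v i k : ℤ) - (v j k : ℤ)) ^ 2)
      atTop (nhds (∑' u : Fin d → ℤ, (g u) ^ 2)) := by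
  have heq : ∀ n : ℕ, (1 / (n : ℝ)) *
        ∑ i ∈ Finset.Icc 1 n, ∑ j ∈ Finset.Icc 1 n,
          (g fun k => (v i k : ℤ) - (v j k : ℤ)) ^ 2
      = ∑' u, (diffCount v n u : ℝ) / n * g u ^ 2 := by
    intro n
    rw [doubleSum_eq_tsum v n (fun u => g u ^ 2), ← tsum_mul_left]
    exact tsum_congr fun u => by ring
  simp_rw [heq]
  refine tendsto_tsum_of_dominated_convergence (summable_sq_of_decay hg) (fun u => ?_) ?_
  · simpa using (tendsto_diffCount_div hd hv u).mul_const (g u ^ 2)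
  · filter_upwards with n u
    have h1 : (diffCount v n u : ℝ) / n ≤ 1 :=
      div_le_one_of_le₀ (by exact_mod_cast diffCount_le (injOn_Ici_one hd hv) n u)
        (Nat.cast_nonneg n)
    rw [Real.norm_eq_abs, abs_of_nonneg (by positivity)]
    exact mul_le_of_le_one_left (sq_nonneg _) h1
end

section
/- Let k, κ : ℤ → ℝ be even functions (k(−i) = k(i), κ(−i) = κ(i)) satisfying |k(i)| ≤ C e^{−a|i|} and |κ(i)| ≤ C e^{−a|i|} for some constants C < ∞ and a > 0. Define the symbols f(ω) = Σ_{i ∈ ℤ} k(i) cos(i ω) and f_θ(ω) = Σ_{i ∈ ℤ} κ(i) cos(i ω) for ω ∈ [−π, π], and assume inf_{ω ∈ [−π, π]} f(ω) > 0. For each n, let T_n = (k(i − j))_{1 ≤ i,j ≤ n} and T'_n = (κ(i − j))_{1 ≤ i,j ≤ n} be the associated n × n Toeplitz matrices. Then T_n is invertible for every n, and (1/n) tr(T_n⁻¹ T'_n T_n⁻¹ T'_n) converges, as n → ∞, to (1/(2π)) ∫_{−π}^{π} f_θ(ω)² / f(ω)² dω. -/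
open Filter Real

/-!
Write `f`, `g` for the symbols of `k`, `κ`, set `h = g / f`, and let `T(s)` be the `n × n` Toeplitz
matrix with symbol `s`. The idea is to replace `T(f)⁻¹ T(g)` by `T(h)`, at a cost that is bounded in
Frobenius norm uniformly in `n`.

* The quadratic form of `T(f)` at `x` is the mean of `f |∑ xⱼ e^{ijω}|²`, hence at least `c ‖x‖²`
  when `f ≥ c` (`quad_lower`). So `T(f)` is invertible and `c ‖D‖_F ≤ ‖T(f) D‖_F` for every `D`
  (`isUnit_of_sq_lower`, `frob_lower`).
* Row `p` of `T(g) - T(f) T(h)` consists of real parts of Fourier coefficients of `h R`, where `R` is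
  `f(ω) e^{ipω}` minus its Fourier partial sum over the frequencies `0, …, n-1`. Bessel's inequality
  and the exponential decay of `k` bound the squared norm of that row by a quantity decaying
  exponentially in the distance from `p` to the two ends of the index range (`row_bound`), so
  `‖T(g) - T(f) T(h)‖_F` is bounded in `n` (`frob_bound`).
* Hence `D = T(f)⁻¹ T(g) - T(h)` has bounded Frobenius norm, while `‖T(h)‖_F² ≤ n ∑ ĥ(m)²`. By
  Cauchy–Schwarz the traces of `(T(f)⁻¹ T(g))²` and `T(h)²` differ by `O(√n)` (`trace_sq_sub_le`).
* Finally `(1/n) tr T(h)² = (1/n) ∑_{i,j} ĥ(i-j)²` tends to `∑ ĥ(m)²` by Cesàro averaging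
  (`cesaro_toeplitz`), and Parseval identifies this sum with the mean of `h²` (`parseval_even`).
-/

namespace ToeplitzTrace

/-! ### Symbols of summable sequences -/

/-- The cosine symbol `ω ↦ ∑ s(i) cos(iω)` of a sequence `s : ℤ → ℝ`. -/
noncomputable def symb (s : ℤ → ℝ) (ω : ℝ) : ℝ := ∑' i : ℤ, s i * Real.cos (i * ω)

/-- The cosine Fourier coefficient `(2π)⁻¹ ∫_{-π}^{π} h(ω) cos(mω) dω`. -/
noncomputable def coef (h : ℝ → ℝ) (m : ℤ) : ℝ :=
  (2 * π)⁻¹ * ∫ ω in (-π)..π, h ω * Real.cos (m * ω)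

lemma summable_exp_abs {b : ℝ} (hb : 0 < b) :
    Summable fun m : ℤ => Real.exp (-b * |(m : ℝ)|) := by
  have h : Summable fun n : ℕ => Real.exp (-b * (n : ℝ)) := by
    have := summable_geometric_of_lt_one (Real.exp_pos (-b)).le
      (Real.exp_lt_one_iff.2 (by linarith))
    refine this.congr fun n => ?_
    rw [← Real.exp_nat_mul]; ring_nf
  refine Summable.of_nat_of_neg ?_ ?_ <;> simpa using h

lemma summable_abs_of_decay {s : ℤ → ℝ} {C a : ℝ} (ha : 0 < a)
    (hs : ∀ i : ℤ, |s i| ≤ C * Real.exp (-a * |(i : ℝ)|)) : Summable fun i => |s i| :=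
  Summable.of_nonneg_of_le (fun _ => abs_nonneg _) hs ((summable_exp_abs ha).mul_left C)

lemma summable_mul_bdd {s t : ℤ → ℝ} (hs : Summable fun i => |s i|) (ht : ∀ i, |t i| ≤ 1) :
    Summable fun i => s i * t i := by
  refine Summable.of_norm_bounded hs fun i => ?_
  rw [Real.norm_eq_abs, abs_mul]
  exact mul_le_of_le_one_right (abs_nonneg _) (ht i)

lemma continuous_symb {s : ℤ → ℝ} (hs : Summable fun i => |s i|) : Continuous (symb s) := by
  refine continuous_tsum (fun i => by fun_prop) hs fun i x => ?_
  rw [Real.norm_eq_abs, abs_mul]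
  exact mul_le_of_le_one_right (abs_nonneg _) (Real.abs_cos_le_one _)

lemma symb_neg (s : ℤ → ℝ) (ω : ℝ) : symb s (-ω) = symb s ω := by
  simp [symb]

lemma symb_periodic (s : ℤ → ℝ) : Function.Periodic (symb s) (2 * π) := by
  intro x
  refine tsum_congr fun i => ?_
  rw [mul_add, Real.cos_add_int_mul_two_pi]

/-- A lower bound for the symbol on `[-π, π]` holds on the whole line by periodicity. -/
lemma symb_lower {s : ℤ → ℝ} {c : ℝ} (h : ∀ ω ∈ Set.Icc (-π) π, c ≤ symb s ω) (ω : ℝ) :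
    c ≤ symb s ω := by
  obtain ⟨y, hy, he⟩ := (symb_periodic s).exists_mem_Ico Real.two_pi_pos ω (-π)
  rw [he]
  exact h y ⟨hy.1, by linarith [hy.2]⟩

lemma integral_cos_int (m : ℤ) :
    ∫ ω in (-π)..π, Real.cos (m * ω) = if m = 0 then 2 * π else 0 := by
  split_ifs with h
  · simp [h]; ring
  · have hm : (m : ℝ) ≠ 0 := by exact_mod_cast h
    rw [intervalIntegral.integral_comp_mul_left _ hm]
    simp [Real.sin_int_mul_pi]

lemma integral_cos_mul_cos (i m : ℤ) :
    ∫ ω in (-π)..π, Real.cos (i * ω) * Real.cos (m * ω)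
      = π * ((if i = m then 1 else 0) + (if i = -m then 1 else 0)) := by
  have h : ∀ ω : ℝ, Real.cos (i * ω) * Real.cos (m * ω)
      = 2⁻¹ * Real.cos ((i - m : ℤ) * ω) + 2⁻¹ * Real.cos ((i + m : ℤ) * ω) := by
    intro ω
    push_cast
    rw [sub_mul, add_mul, Real.cos_sub, Real.cos_add]; ring
  simp_rw [h]
  rw [intervalIntegral.integral_add (Continuous.intervalIntegrable (by fun_prop) _ _)
    (Continuous.intervalIntegrable (by fun_prop) _ _), intervalIntegral.integral_const_mul,
    intervalIntegral.integral_const_mul, integral_cos_int, integral_cos_int]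
  simp only [sub_eq_zero, ← eq_neg_iff_add_eq_zero]
  split_ifs <;> ring

/-- The Fourier coefficients of the symbol of an even summable sequence are its entries. -/
lemma coef_symb {s : ℤ → ℝ} (hse : ∀ i, s (-i) = s i) (hs : Summable fun i => |s i|) (m : ℤ) :
    coef (symb s) m = s m := by
  have h1 : HasSum (fun i : ℤ => ∫ ω in (-π)..π, s i * Real.cos (i * ω) * Real.cos (m * ω))
      (∫ ω in (-π)..π, symb s ω * Real.cos (m * ω)) := by
    refine intervalIntegral.hasSum_integral_of_dominated_convergence (fun i _ => |s i|)
      (fun i => Continuous.aestronglyMeasurable (by fun_prop)) ?_ ?_ ?_ ?_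
    · refine fun i => Eventually.of_forall fun x _ => ?_
      rw [Real.norm_eq_abs, abs_mul, abs_mul, mul_assoc]
      exact mul_le_of_le_one_right (abs_nonneg _)
        (mul_le_one₀ (Real.abs_cos_le_one _) (abs_nonneg _) (Real.abs_cos_le_one _))
    · exact Eventually.of_forall fun x _ => hs
    · simp
    · refine Eventually.of_forall fun x _ => HasSum.mul_right _ ?_
      exact (summable_mul_bdd hs fun i => Real.abs_cos_le_one _).hasSum
  have h2 : ∀ i : ℤ, ∫ ω in (-π)..π, s i * Real.cos (i * ω) * Real.cos (m * ω)
      = (if i = m then π * s m else 0) + (if i = -m then π * s m else 0) := by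
    intro i
    simp_rw [mul_assoc]
    rw [intervalIntegral.integral_const_mul, integral_cos_mul_cos]
    by_cases h : i = m <;> by_cases h' : i = -m <;> simp [h, h'] <;> simp_all <;> ring
  simp_rw [h2] at h1
  have h3 := (hasSum_ite_eq m (π * s m)).add (hasSum_ite_eq (-m) (π * s m))
  rw [coef, h1.unique h3]
  field_simp
  ring

/-! ### Coercivity -/

/-- The quadratic form of a Toeplitz matrix is at least `c` times the squared norm when the symbol
is at least `c`: it is the mean of the symbol against `|∑ xᵢ e^{iω}|²`. -/
lemma quad_lower {s : ℤ → ℝ} (hse : ∀ i, s (-i) = s i) (hs : Summable fun i => |s i|) {c : ℝ}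
    (hc : ∀ ω, c ≤ symb s ω) {n : ℕ} (x : Fin n → ℝ) :
    c * ∑ i, x i ^ 2 ≤ ∑ i, x i * ∑ j : Fin n, s ((i : ℤ) - (j : ℤ)) * x j := by
  set P : ℝ → ℝ := fun ω => ∑ i : Fin n, ∑ j : Fin n,
    x i * x j * Real.cos (((i : ℤ) - (j : ℤ) : ℤ) * ω) with hP
  have hP0 : ∀ ω, 0 ≤ P ω := by
    intro ω
    have : P ω = (∑ i : Fin n, x i * Real.cos (i * ω)) ^ 2
        + (∑ i : Fin n, x i * Real.sin (i * ω)) ^ 2 := by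
      simp only [hP, sq, Finset.sum_mul_sum, ← Finset.sum_add_distrib]
      refine Finset.sum_congr rfl fun i _ => Finset.sum_congr rfl fun j _ => ?_
      push_cast
      rw [sub_mul, Real.cos_sub]; ring
    rw [this]; positivity
  have hPc : Continuous P := by fun_prop
  have hfc := continuous_symb hs
  have hmul : ∀ F : ℝ → ℝ, Continuous F → (2 * π)⁻¹ * ∫ ω in (-π)..π, F ω * P ω
      = ∑ i : Fin n, ∑ j : Fin n, x i * x j * coef F ((i : ℤ) - (j : ℤ)) := by
    intro F hF
    simp only [hP, Finset.mul_sum, coef]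
    rw [intervalIntegral.integral_finsetSum
      (fun i _ => Continuous.intervalIntegrable (by fun_prop) _ _), Finset.mul_sum]
    refine Finset.sum_congr rfl fun i _ => ?_
    rw [intervalIntegral.integral_finsetSum
      (fun i _ => Continuous.intervalIntegrable (by fun_prop) _ _), Finset.mul_sum]
    refine Finset.sum_congr rfl fun j _ => ?_
    rw [mul_left_comm (x i * x j), ← intervalIntegral.integral_const_mul (x i * x j)]
    congr 1
    exact intervalIntegral.integral_congr fun ω _ => by ring
  have h1 : (2 * π)⁻¹ * ∫ ω in (-π)..π, c * P ω ≤ (2 * π)⁻¹ * ∫ ω in (-π)..π, symb s ω * P ω := by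
    refine mul_le_mul_of_nonneg_left ?_ (by positivity)
    refine intervalIntegral.integral_mono_on (by linarith [pi_pos])
      (Continuous.intervalIntegrable (by fun_prop) _ _)
      (Continuous.intervalIntegrable (by fun_prop) _ _) fun ω _ => ?_
    exact mul_le_mul_of_nonneg_right (hc ω) (hP0 ω)
  rw [hmul _ continuous_const, hmul _ hfc] at h1
  have hcc : ∀ i j : Fin n, coef (fun _ => c) ((i : ℤ) - (j : ℤ)) = if i = j then c else 0 := by
    intro i j
    rw [coef, intervalIntegral.integral_const_mul, integral_cos_int]
    have : ((i : ℤ) - (j : ℤ) = 0) ↔ i = j := by rw [sub_eq_zero, Nat.cast_inj, Fin.ext_iff]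
    simp only [this]
    split_ifs
    · field_simp
    · simp
  simp only [hcc, coef_symb hse hs] at h1
  convert h1 using 1
  · simp [Finset.mul_sum, sq]; refine Finset.sum_congr rfl fun i _ => by ring
  · refine Finset.sum_congr rfl fun i _ => ?_
    rw [Finset.mul_sum]
    refine Finset.sum_congr rfl fun j _ => by ring

/-- A coercive matrix `T ≥ c` satisfies `‖T x‖ ≥ c ‖x‖`. -/
lemma sq_lower_of_quad {n : ℕ} {T : Matrix (Fin n) (Fin n) ℝ} {c : ℝ} (hc : 0 < c)
    (h : ∀ x : Fin n → ℝ, c * ∑ i, x i ^ 2 ≤ ∑ i, x i * T.mulVec x i) (x : Fin n → ℝ) :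
    c ^ 2 * ∑ i, x i ^ 2 ≤ ∑ i, T.mulVec x i ^ 2 := by
  have h1 := h x
  have h2 := Finset.sum_mul_sq_le_sq_mul_sq Finset.univ x (T.mulVec x)
  have hX : 0 ≤ ∑ i, x i ^ 2 := Finset.sum_nonneg fun i _ => sq_nonneg _
  have hY : 0 ≤ ∑ i, T.mulVec x i ^ 2 := Finset.sum_nonneg fun i _ => sq_nonneg _
  have h3 := pow_le_pow_left₀ (by positivity) h1 2
  rcases hX.eq_or_lt with h0 | h0
  · rw [← h0]; simpa using hY
  · refine le_of_mul_le_mul_left ?_ h0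
    nlinarith

lemma isUnit_of_sq_lower {n : ℕ} {T : Matrix (Fin n) (Fin n) ℝ} {c : ℝ} (hc : 0 < c)
    (h : ∀ x : Fin n → ℝ, c ^ 2 * ∑ i, x i ^ 2 ≤ ∑ i, T.mulVec x i ^ 2) : IsUnit T := by
  rw [← Matrix.mulVec_injective_iff_isUnit]
  refine (injective_iff_map_eq_zero T.mulVecLin).2 fun x hx => ?_
  have hx' : T.mulVec x = 0 := hx
  have h1 := h x
  simp only [hx', Pi.zero_apply, ne_eq, OfNat.ofNat_ne_zero, not_false_eq_true, zero_pow,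
    Finset.sum_const_zero] at h1
  have h2 : ∑ i, x i ^ 2 = 0 := le_antisymm (by
    by_contra! h3
    have : 0 < c ^ 2 * ∑ i, x i ^ 2 := by positivity
    linarith) (Finset.sum_nonneg fun i _ => sq_nonneg _)
  rw [Finset.sum_eq_zero_iff_of_nonneg fun i _ => sq_nonneg _] at h2
  ext i
  simpa using h2 i (Finset.mem_univ _)

/-- `‖T D‖_F ≥ c ‖D‖_F`, column by column. -/
lemma frob_lower {n : ℕ} {T : Matrix (Fin n) (Fin n) ℝ} {c : ℝ}
    (h : ∀ x : Fin n → ℝ, c ^ 2 * ∑ i, x i ^ 2 ≤ ∑ i, T.mulVec x i ^ 2)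
    (D : Matrix (Fin n) (Fin n) ℝ) :
    c ^ 2 * ∑ i, ∑ j, D i j ^ 2 ≤ ∑ i, ∑ j, (T * D) i j ^ 2 := by
  rw [Finset.sum_comm, Finset.sum_comm (f := fun i j => (T * D) i j ^ 2), Finset.mul_sum]
  exact Finset.sum_le_sum fun j _ => h fun i => D i j

/-! ### Bessel and Parseval -/

/-- The exponential Fourier coefficient of `p + i q`, in terms of cosine and sine integrals. -/
lemma fourierCoeffOn_eq {p q : ℝ → ℝ} (hp : Continuous p) (hq : Continuous q) (m : ℤ)
    (hab : -π < π) :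
    fourierCoeffOn hab (fun ω => (p ω : ℂ) + q ω * Complex.I) m
      = (((2 * π)⁻¹ * ∫ ω in (-π)..π, (p ω * Real.cos (m * ω) + q ω * Real.sin (m * ω)) : ℝ) : ℂ)
        + (((2 * π)⁻¹ * ∫ ω in (-π)..π,
          (q ω * Real.cos (m * ω) - p ω * Real.sin (m * ω)) : ℝ) : ℂ) * Complex.I := by
  rw [fourierCoeffOn_eq_integral]
  have hpt : ∀ x : ℝ, (fourier (-m)) (x : AddCircle (π - -π)) • ((p x : ℂ) + q x * Complex.I)
      = ((p x * Real.cos (m * x) + q x * Real.sin (m * x) : ℝ) : ℂ)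
        + ((q x * Real.cos (m * x) - p x * Real.sin (m * x) : ℝ) : ℂ) * Complex.I := by
    intro x
    rw [fourier_coe_apply]
    have : 2 * (π : ℂ) * Complex.I * ((-m : ℤ) : ℂ) * x / ((π - -π : ℝ) : ℂ)
        = ((-(m * x) : ℝ) : ℂ) * Complex.I := by
      have : (π : ℂ) ≠ 0 := by exact_mod_cast pi_ne_zero
      push_cast
      field_simp
      ring
    rw [this, Complex.exp_mul_I, ← Complex.ofReal_cos, ← Complex.ofReal_sin, Real.cos_neg,
      Real.sin_neg]
    push_cast
    rw [smul_eq_mul]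
    linear_combination (-Complex.sin (m * x) * q x) * Complex.I_sq
  simp_rw [hpt]
  rw [intervalIntegral.integral_add (Continuous.intervalIntegrable (by fun_prop) _ _)
    (Continuous.intervalIntegrable (by fun_prop) _ _), intervalIntegral.integral_mul_const,
    intervalIntegral.integral_ofReal, intervalIntegral.integral_ofReal, Complex.real_smul]
  push_cast
  have : ((π : ℂ) - -π) = 2 * π := by ring
  rw [this]
  ring

/-- Parseval for `p + i q` on `[-π, π]`. -/
lemma parseval {p q : ℝ → ℝ} (hp : Continuous p) (hq : Continuous q) (hab : -π < π) :
    HasSum (fun m : ℤ => ‖fourierCoeffOn hab (fun ω => (p ω : ℂ) + q ω * Complex.I) m‖ ^ 2)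
      ((2 * π)⁻¹ * ∫ ω in (-π)..π, (p ω ^ 2 + q ω ^ 2)) := by
  have hc : Continuous (fun ω => (p ω : ℂ) + q ω * Complex.I) := by fun_prop
  have hL : MeasureTheory.MemLp (fun ω => (p ω : ℂ) + q ω * Complex.I) 2
      (MeasureTheory.volume.restrict (Set.Ioc (-π) π)) := by
    obtain ⟨B, hB⟩ :=
      isCompact_Icc.exists_bound_of_continuousOn (hc.continuousOn (s := Set.Icc (-π) π))
    refine MeasureTheory.MemLp.of_bound hc.aestronglyMeasurable B ?_
    filter_upwards [MeasureTheory.ae_restrict_mem measurableSet_Ioc] with x hx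
    exact hB x (Set.Ioc_subset_Icc_self hx)
  have h := hasSum_sq_fourierCoeffOn hab hL
  have e : ∀ x : ℝ, ‖(p x : ℂ) + q x * Complex.I‖ ^ 2 = p x ^ 2 + q x ^ 2 := by
    intro x
    rw [← Complex.normSq_eq_norm_sq, Complex.normSq_add_mul_I]
  simp_rw [e] at h
  have e2 : π - -π = 2 * π := by ring
  rw [e2, smul_eq_mul] at h
  exact h

/-- Bessel's inequality for the coefficients `∫ (p cos(mω) + q sin(mω))`, i.e. the real parts of
the Fourier coefficients of `p + i q`. -/
lemma bessel {p q : ℝ → ℝ} (hp : Continuous p) (hq : Continuous q) {n : ℕ} :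
    ∑ m : Fin n, ((2 * π)⁻¹ * ∫ ω in (-π)..π,
        (p ω * Real.cos (m * ω) + q ω * Real.sin (m * ω))) ^ 2
      ≤ (2 * π)⁻¹ * ∫ ω in (-π)..π, (p ω ^ 2 + q ω ^ 2) := by
  have hab : -π < π := by linarith [pi_pos]
  have h := sum_le_hasSum ((Finset.range n).map Nat.castEmbedding) (fun _ _ => by positivity)
    (parseval hp hq hab)
  refine le_trans ?_ h
  rw [Finset.sum_map, Finset.sum_range]
  refine Finset.sum_le_sum fun m _ => ?_
  rw [fourierCoeffOn_eq hp hq, ← Complex.normSq_eq_norm_sq, Complex.normSq_add_mul_I]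
  simp only [Nat.castEmbedding_apply, Int.cast_natCast]
  exact le_add_of_nonneg_right (sq_nonneg _)

/-- Parseval for the cosine coefficients of an even function. -/
lemma parseval_even {h : ℝ → ℝ} (hc : Continuous h) (he : ∀ ω, h (-ω) = h ω) :
    HasSum (fun m : ℤ => coef h m ^ 2) ((2 * π)⁻¹ * ∫ ω in (-π)..π, h ω ^ 2) := by
  have hab : -π < π := by linarith [pi_pos]
  have hs : ∀ m : ℤ, ∫ ω in (-π)..π, h ω * Real.sin (m * ω) = 0 := by
    intro m
    have := intervalIntegral.integral_comp_neg (a := -π) (b := π)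
      (fun ω => h ω * Real.sin (m * ω))
    simp only [he, mul_neg, Real.sin_neg, intervalIntegral.integral_neg, neg_neg] at this
    linarith
  have h1 := parseval hc (continuous_const (y := (0 : ℝ))) hab
  simp only [fourierCoeffOn_eq hc (continuous_const (y := (0 : ℝ))),
    ← Complex.normSq_eq_norm_sq, Complex.normSq_add_mul_I] at h1
  simpa [hs, coef] using h1

/-! ### Cesàro averaging along diagonals -/

/-- `(1/n) ∑_{i,j<n} u(i-j) → ∑ u`, by Cesàro averaging: passing from `n` to `n+1` adds the sum of
`u` over `[-n, n]`. -/
lemma cesaro_toeplitz {u : ℤ → ℝ} {S : ℝ} (hu : HasSum u S) :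
    Tendsto (fun n : ℕ => (1 / (n : ℝ)) * ∑ i : Fin n, ∑ j : Fin n, u ((i : ℤ) - (j : ℤ)))
      atTop (nhds S) := by
  set d : ℕ → ℝ := fun n => (∑ j ∈ Finset.range (n + 1), (u j + u (-j))) - u 0 with hd
  have h1 : Tendsto d atTop (nhds S) := by
    have := (hu.nat_add_neg.tendsto_sum_nat.comp (tendsto_add_atTop_nat 1)).sub_const (u 0)
    simpa using this
  have h2 : ∀ n : ℕ, ∑ i ∈ Finset.range n, ∑ j ∈ Finset.range n, u ((i : ℤ) - (j : ℤ))
      = ∑ i ∈ Finset.range n, d i := by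
    intro n
    induction n with
    | zero => simp
    | succ n ih =>
      rw [Finset.sum_range_succ d, ← ih, Finset.sum_range_succ]
      simp_rw [Finset.sum_range_succ _ n]
      rw [Finset.sum_add_distrib, hd]
      simp only
      rw [Finset.sum_range_succ', Finset.sum_add_distrib]
      have e1 : ∑ i ∈ Finset.range n, u ((i : ℤ) - (n : ℤ))
          = ∑ i ∈ Finset.range n, u (-((i + 1 : ℕ) : ℤ)) := by
        rw [← Finset.sum_range_reflect]
        refine Finset.sum_congr rfl fun i hi => ?_
        have := Finset.mem_range.1 hi
        congr 1; omega
      have e2 : ∑ i ∈ Finset.range n, u ((n : ℤ) - (i : ℤ))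
          = ∑ i ∈ Finset.range n, u ((i + 1 : ℕ) : ℤ) := by
        rw [← Finset.sum_range_reflect]
        refine Finset.sum_congr rfl fun i hi => ?_
        have := Finset.mem_range.1 hi
        congr 1; omega
      rw [e1, e2]
      simp
      ring
  refine h1.cesaro.congr fun n => ?_
  rw [← h2, Finset.sum_range, one_div]
  congr 1
  exact Finset.sum_congr rfl fun i _ => Finset.sum_range _

/-! ### The truncation error `T(f h) - T(f) T(h)` -/

/-- The total contribution of the terms `l ∉ [0, n)` to `∑ k(i-l) t(l)` is exponentially small in the
distance of the row `i` from the two ends of `[0, n)`. -/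
lemma tail_bound {k : ℤ → ℝ} {C a : ℝ} (hC : 0 ≤ C) (ha : 0 < a)
    (hk : ∀ i : ℤ, |k i| ≤ C * Real.exp (-a * |(i : ℝ)|)) {n : ℕ} (i : Fin n) {t : ℤ → ℝ}
    (ht : ∀ l, |t l| ≤ 1) {F : ℝ} (hF : HasSum (fun l : ℤ => k ((i : ℤ) - l) * t l) F) :
    |F - ∑ l : Fin n, k ((i : ℤ) - (l : ℤ)) * t l|
      ≤ (∑' m : ℤ, C * Real.exp (-(a / 2) * |(m : ℝ)|)) *
        (Real.exp (-(a / 2) * (i : ℝ)) + Real.exp (-(a / 2) * ((n - 1 - i : ℕ) : ℝ))) := by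
  set W := Real.exp (-(a / 2) * (i : ℝ)) + Real.exp (-(a / 2) * ((n - 1 - i : ℕ) : ℝ)) with hW
  set g : ℤ → ℝ := fun l => k ((i : ℤ) - l) * t l with hg
  set s : Finset ℤ := (Finset.range n).map Nat.castEmbedding with hs
  have hsum : ∑ l : Fin n, k ((i : ℤ) - (l : ℤ)) * t l = ∑ l ∈ s, if l ∈ s then g l else 0 := by
    rw [Finset.sum_ite_mem, Finset.inter_self, hs, Finset.sum_map, Finset.sum_range]
    rfl
  have h1 : HasSum (fun l => if l ∈ s then g l else 0) (∑ l ∈ s, if l ∈ s then g l else 0) :=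
    hasSum_sum_of_ne_finset_zero fun l hl => if_neg hl
  have h2 := hF.sub h1
  rw [hsum, ← h2.tsum_eq, ← Real.norm_eq_abs]
  have hb := ((summable_exp_abs (half_pos ha)).mul_left C).hasSum
  have hb' := ((Equiv.subLeft (i : ℤ)).hasSum_iff.2 hb).mul_right W
  refine tsum_of_norm_bounded hb' fun l => ?_
  rw [Real.norm_eq_abs]
  simp only [Function.comp, Equiv.subLeft_apply]
  have hW0 : 0 ≤ W := by positivity
  split_ifs with hl
  · rw [sub_self, abs_zero]; positivity
  · rw [sub_zero, hg, abs_mul]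
    have hout : l < 0 ∨ (n : ℤ) ≤ l := by
      by_contra! hcon
      refine hl (Finset.mem_map.2 ⟨l.toNat, Finset.mem_range.2 (by omega), ?_⟩)
      simp [hcon.1]
    have hexp : Real.exp (-(a / 2) * |(((i : ℤ) - l : ℤ) : ℝ)|) ≤ W := by
      rcases hout with hl | hl
      · refine le_trans ?_ (le_add_of_nonneg_right (Real.exp_pos _).le)
        refine Real.exp_le_exp.2 (mul_le_mul_of_nonpos_left ?_ (by linarith))
        refine le_trans ?_ (le_abs_self _)
        exact_mod_cast (by omega : (i : ℤ) ≤ (i : ℤ) - l)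
      · refine le_trans ?_ (le_add_of_nonneg_left (Real.exp_pos _).le)
        refine Real.exp_le_exp.2 (mul_le_mul_of_nonpos_left ?_ (by linarith))
        refine le_trans ?_ (neg_le_abs _)
        have : ((n - 1 - i : ℕ) : ℤ) ≤ -((i : ℤ) - l) := by have := i.2; omega
        exact_mod_cast this
    calc |k ((i : ℤ) - l)| * |t l| ≤ |k ((i : ℤ) - l)| :=
          mul_le_of_le_one_right (abs_nonneg _) (ht l)
      _ ≤ C * Real.exp (-a * |(((i : ℤ) - l : ℤ) : ℝ)|) := hk _
      _ = C * Real.exp (-(a / 2) * |(((i : ℤ) - l : ℤ) : ℝ)|)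
            * Real.exp (-(a / 2) * |(((i : ℤ) - l : ℤ) : ℝ)|) := by
          rw [mul_assoc, ← Real.exp_add]; ring_nf
      _ ≤ _ := mul_le_mul_of_nonneg_left hexp (by positivity)

lemma tsum_mul_sin {s : ℤ → ℝ} (hse : ∀ i, s (-i) = s i) (hs : Summable fun i => |s i|) (ω : ℝ) :
    HasSum (fun m : ℤ => s m * Real.sin (m * ω)) 0 := by
  have h := (summable_mul_bdd hs fun i => Real.abs_sin_le_one (i * ω)).hasSum
  have h' := (Equiv.neg ℤ).hasSum_iff.2 h
  have e : ((fun m : ℤ => s m * Real.sin (m * ω)) ∘ (Equiv.neg ℤ))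
      = fun m : ℤ => -(s m * Real.sin (m * ω)) := by
    ext m; simp [hse]
  rw [e] at h'
  have := h'.unique h.neg
  have h0 : ∑' m : ℤ, s m * Real.sin (m * ω) = 0 := by linarith
  rwa [h0] at h

/-- Real part of `f(ω) e(iω) = ∑ s(i-l) e(lω)`, where `f` is the symbol of `s` and `e(x) = cos x +
√-1 sin x`. -/
lemma hasSum_symb_mul_cos {s : ℤ → ℝ} (hse : ∀ i, s (-i) = s i) (hs : Summable fun i => |s i|)
    (i : ℤ) (ω : ℝ) :
    HasSum (fun l : ℤ => s (i - l) * Real.cos (l * ω)) (symb s ω * Real.cos (i * ω)) := by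
  have h1 : HasSum (fun m : ℤ => s m * Real.cos (m * ω)) (symb s ω) :=
    (summable_mul_bdd hs fun i => Real.abs_cos_le_one _).hasSum
  have h2 := (h1.mul_right (Real.cos (i * ω))).add
    ((tsum_mul_sin hse hs ω).mul_right (Real.sin (i * ω)))
  rw [zero_mul, add_zero, ← (Equiv.subLeft i).hasSum_iff] at h2
  refine h2.congr_fun fun l => ?_
  simp only [Function.comp, Equiv.subLeft_apply]
  have : (l : ℝ) * ω = i * ω - ((i - l : ℤ) : ℝ) * ω := by push_cast; ring
  rw [this, Real.cos_sub]; ring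

/-- Imaginary part of `f(ω) e(iω) = ∑ s(i-l) e(lω)`, where `f` is the symbol of `s` and `e(x) = cos x +
√-1 sin x`. -/
lemma hasSum_symb_mul_sin {s : ℤ → ℝ} (hse : ∀ i, s (-i) = s i) (hs : Summable fun i => |s i|)
    (i : ℤ) (ω : ℝ) :
    HasSum (fun l : ℤ => s (i - l) * Real.sin (l * ω)) (symb s ω * Real.sin (i * ω)) := by
  have h1 : HasSum (fun m : ℤ => s m * Real.cos (m * ω)) (symb s ω) :=
    (summable_mul_bdd hs fun i => Real.abs_cos_le_one _).hasSum
  have h2 := (h1.mul_right (Real.sin (i * ω))).sub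
    ((tsum_mul_sin hse hs ω).mul_right (Real.cos (i * ω)))
  rw [zero_mul, sub_zero, ← (Equiv.subLeft i).hasSum_iff] at h2
  refine h2.congr_fun fun l => ?_
  simp only [Function.comp, Equiv.subLeft_apply]
  have : (l : ℝ) * ω = i * ω - ((i - l : ℤ) : ℝ) * ω := by push_cast; ring
  rw [this, Real.sin_sub]; ring

/-- The `n × n` Toeplitz matrix of a sequence. -/
def toep (s : ℤ → ℝ) (n : ℕ) : Matrix (Fin n) (Fin n) ℝ :=
  Matrix.of fun i j : Fin n => s ((i : ℤ) - (j : ℤ))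

/-- Row `i` of `T(f h) - T(f) T(h)` consists of real parts of Fourier coefficients of `h R`, where
`R = P + √-1 Q` is the part of the Fourier series of `f` times the `i`-th exponential that is
supported off `[0, n)`. Bessel's inequality bounds the norm of the row by that of `h R`. -/
lemma row_bound {k κ : ℤ → ℝ} (hke : ∀ i, k (-i) = k i) (hκe : ∀ i, κ (-i) = κ i) {C a : ℝ}
    (hC : 0 ≤ C) (ha : 0 < a) (hk : ∀ i : ℤ, |k i| ≤ C * Real.exp (-a * |(i : ℝ)|))
    (hκ : Summable fun i => |κ i|) {h : ℝ → ℝ} (hc : Continuous h)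
    (hfh : ∀ ω, symb k ω * h ω = symb κ ω) {A : ℝ} (hA : ∀ ω, |h ω| ≤ A) {n : ℕ} (i : Fin n) :
    ∑ j, (toep κ n - toep k n * toep (coef h) n) i j ^ 2
      ≤ 2 * A ^ 2 * ((∑' m : ℤ, C * Real.exp (-(a / 2) * |(m : ℝ)|)) *
        (Real.exp (-(a / 2) * (i : ℝ)) + Real.exp (-(a / 2) * ((n - 1 - i : ℕ) : ℝ)))) ^ 2 := by
  have hks := summable_abs_of_decay ha hk
  have hfc := continuous_symb hks
  have hgc := continuous_symb hκ
  set r := (∑' m : ℤ, C * Real.exp (-(a / 2) * |(m : ℝ)|)) *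
        (Real.exp (-(a / 2) * (i : ℝ)) + Real.exp (-(a / 2) * ((n - 1 - i : ℕ) : ℝ))) with hr
  set P : ℝ → ℝ := fun ω => symb k ω * Real.cos ((i : ℤ) * ω)
    - ∑ l : Fin n, k ((i : ℤ) - (l : ℤ)) * Real.cos ((l : ℤ) * ω) with hP
  set Q : ℝ → ℝ := fun ω => symb k ω * Real.sin ((i : ℤ) * ω)
    - ∑ l : Fin n, k ((i : ℤ) - (l : ℤ)) * Real.sin ((l : ℤ) * ω) with hQ
  have hPr : ∀ ω, |P ω| ≤ r := fun ω => tail_bound hC ha hk i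
    (t := fun l => Real.cos (l * ω)) (fun l => Real.abs_cos_le_one _)
    (hasSum_symb_mul_cos hke hks i ω)
  have hQr : ∀ ω, |Q ω| ≤ r := fun ω => tail_bound hC ha hk i
    (t := fun l => Real.sin (l * ω)) (fun l => Real.abs_sin_le_one _)
    (hasSum_symb_mul_sin hke hks i ω)
  have hPc : Continuous P := by fun_prop
  have hQc : Continuous Q := by fun_prop
  have hentry : ∀ j : Fin n, (toep κ n - toep k n * toep (coef h) n) i j
      = (2 * π)⁻¹ * ∫ ω in (-π)..π,
        (h ω * P ω * Real.cos (j * ω) + h ω * Q ω * Real.sin (j * ω)) := by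
    intro j
    have hpt : ∀ ω, h ω * P ω * Real.cos (j * ω) + h ω * Q ω * Real.sin (j * ω)
        = symb κ ω * Real.cos (((i : ℤ) - (j : ℤ) : ℤ) * ω)
          - ∑ l : Fin n, k ((i : ℤ) - (l : ℤ))
            * (h ω * Real.cos (((l : ℤ) - (j : ℤ) : ℤ) * ω)) := by
      intro ω
      have e : ∀ l : Fin n, k ((i : ℤ) - (l : ℤ)) * (h ω * Real.cos (((l : ℤ) - (j : ℤ) : ℤ) * ω))
          = h ω * Real.cos (j * ω) * (k ((i : ℤ) - (l : ℤ)) * Real.cos ((l : ℤ) * ω))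
            + h ω * Real.sin (j * ω) * (k ((i : ℤ) - (l : ℤ)) * Real.sin ((l : ℤ) * ω)) := by
        intro l
        push_cast
        rw [sub_mul, Real.cos_sub]; ring
      simp only [e, Finset.sum_add_distrib, ← Finset.mul_sum, ← hfh, hP, hQ]
      push_cast
      rw [sub_mul, Real.cos_sub]; ring
    simp_rw [hpt]
    rw [intervalIntegral.integral_sub (Continuous.intervalIntegrable (by fun_prop) _ _)
      (Continuous.intervalIntegrable (by fun_prop) _ _), intervalIntegral.integral_finsetSum
      (fun i _ => Continuous.intervalIntegrable (by fun_prop) _ _), mul_sub, Finset.mul_sum]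
    simp_rw [intervalIntegral.integral_const_mul, mul_left_comm _ (k _)]
    rw [Matrix.sub_apply, Matrix.mul_apply]
    simp only [toep, Matrix.of_apply]
    congr 1
    exact (coef_symb hκe hκ _).symm
  simp_rw [hentry]
  refine (bessel (hc.mul hPc) (hc.mul hQc)).trans ?_
  have hle : ∫ ω in (-π)..π, ((h ω * P ω) ^ 2 + (h ω * Q ω) ^ 2)
      ≤ ∫ ω in (-π)..π, 2 * A ^ 2 * r ^ 2 := by
    refine intervalIntegral.integral_mono_on (by linarith [pi_pos])
      (Continuous.intervalIntegrable (by fun_prop) _ _)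
      (Continuous.intervalIntegrable (by fun_prop) _ _) fun ω _ => ?_
    have h1 := sq_le_sq.2 ((hA ω).trans (le_abs_self A))
    have h2 := sq_le_sq.2 ((hPr ω).trans (le_abs_self r))
    have h3 := sq_le_sq.2 ((hQr ω).trans (le_abs_self r))
    rw [mul_pow, mul_pow]
    have h4 := mul_le_mul h1 h2 (sq_nonneg _) (sq_nonneg _)
    have h5 := mul_le_mul h1 h3 (sq_nonneg _) (sq_nonneg _)
    linarith
  refine (mul_le_mul_of_nonneg_left hle (by positivity)).trans (le_of_eq ?_)
  rw [intervalIntegral.integral_const, smul_eq_mul]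
  field_simp
  ring

/-- `‖T(f h) - T(f) T(h)‖_F²` is bounded uniformly in `n`. -/
lemma frob_bound {k κ : ℤ → ℝ} (hke : ∀ i, k (-i) = k i) (hκe : ∀ i, κ (-i) = κ i) {C a : ℝ}
    (hC : 0 ≤ C) (ha : 0 < a) (hk : ∀ i : ℤ, |k i| ≤ C * Real.exp (-a * |(i : ℝ)|))
    (hκ : Summable fun i => |κ i|) {h : ℝ → ℝ} (hc : Continuous h)
    (hfh : ∀ ω, symb k ω * h ω = symb κ ω) {A : ℝ} (hA : ∀ ω, |h ω| ≤ A) :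
    ∃ K, 0 ≤ K ∧ ∀ n, ∑ i, ∑ j, (toep κ n - toep k n * toep (coef h) n) i j ^ 2 ≤ K := by
  set M := ∑' m : ℤ, C * Real.exp (-(a / 2) * |(m : ℝ)|) with hM
  set v : ℕ → ℝ := fun i => Real.exp (-(a / 2) * (i : ℝ)) with hv
  have hvs : Summable v := by
    simpa [hv, Function.comp_def] using
      (summable_exp_abs (half_pos ha)).comp_injective (Nat.cast_injective (R := ℤ))
  have hv0 : ∀ i, 0 ≤ v i := fun i => (Real.exp_pos _).le
  have hv1 : ∀ i, v i ≤ 1 := fun i => Real.exp_le_one_iff.2 (by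
    have : (0 : ℝ) ≤ i := i.cast_nonneg
    nlinarith)
  refine ⟨2 * A ^ 2 * M ^ 2 * (2 * (2 * ∑' i, v i)), by
    have : 0 ≤ ∑' i, v i := tsum_nonneg hv0
    exact mul_nonneg (by positivity) (by linarith),
    fun n => ?_⟩
  calc ∑ i, ∑ j, (toep κ n - toep k n * toep (coef h) n) i j ^ 2
      ≤ ∑ i : Fin n, 2 * A ^ 2 * M ^ 2 * (2 * (v i + v (n - 1 - i))) := by
        refine Finset.sum_le_sum fun i _ =>
          (row_bound hke hκe hC ha hk hκ hc hfh hA i).trans ?_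
        rw [mul_pow, ← mul_assoc]
        refine mul_le_mul_of_nonneg_left ?_ (by positivity)
        change (v i + v (n - 1 - i)) ^ 2 ≤ _
        nlinarith [hv0 i, hv0 (n - 1 - i), hv1 i, hv1 (n - 1 - i)]
    _ = 2 * A ^ 2 * M ^ 2 * (2 * (2 * ∑ i ∈ Finset.range n, v i)) := by
        rw [← Finset.mul_sum, ← Finset.mul_sum, Finset.sum_add_distrib,
          ← Finset.sum_range (fun i => v (n - 1 - i)), ← Finset.sum_range v,
          Finset.sum_range_reflect]
        ring
    _ ≤ _ := by
        have := hvs.sum_le_tsum (Finset.range n) (fun i _ => hv0 i)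
        gcongr

/-! ### Comparison of traces -/

/-- Cauchy–Schwarz for the trace pairing. -/
lemma trace_mul_sq_le {n : ℕ} (X Y : Matrix (Fin n) (Fin n) ℝ) :
    (X * Y).trace ^ 2 ≤ (∑ i, ∑ j, X i j ^ 2) * ∑ i, ∑ j, Y i j ^ 2 := by
  have h := Finset.sum_mul_sq_le_sq_mul_sq Finset.univ (fun p : Fin n × Fin n => X p.1 p.2)
    (fun p => Y p.2 p.1)
  simp only [Fintype.sum_prod_type] at h
  rw [Finset.sum_comm (f := fun i j => Y i j ^ 2)]
  simpa [Matrix.trace, Matrix.mul_apply] using h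

/-- A perturbation of bounded Frobenius norm changes `tr X²` by at most the order of `‖Y‖_F`. -/
lemma trace_sq_sub_le {n : ℕ} (X Y : Matrix (Fin n) (Fin n) ℝ) {b d : ℝ}
    (hY : ∑ i, ∑ j, Y i j ^ 2 ≤ b) (hD : ∑ i, ∑ j, (X - Y) i j ^ 2 ≤ d) :
    |(X * X).trace - (Y * Y).trace| ≤ 2 * √(b * d) + d := by
  have e : X * X = Y * Y + Y * (X - Y) + (X - Y) * Y + (X - Y) * (X - Y) := by noncomm_ring
  have h1 := trace_mul_sq_le Y (X - Y)
  have h2 := trace_mul_sq_le (X - Y) (X - Y)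
  have hY0 : 0 ≤ ∑ i, ∑ j, Y i j ^ 2 := by positivity
  have hD0 : 0 ≤ ∑ i, ∑ j, (X - Y) i j ^ 2 := by positivity
  have h3 : |(Y * (X - Y)).trace| ≤ √(b * d) :=
    Real.abs_le_sqrt (h1.trans (mul_le_mul hY hD hD0 (hY0.trans hY)))
  have h4 : |((X - Y) * (X - Y)).trace| ≤ d :=
    (abs_le_of_sq_le_sq (h2.trans (sq _).ge) hD0).trans hD
  have h5 : (X * X).trace - (Y * Y).trace
      = 2 * (Y * (X - Y)).trace + ((X - Y) * (X - Y)).trace := by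
    rw [e, Matrix.trace_add, Matrix.trace_add, Matrix.trace_add, Matrix.trace_mul_comm (X - Y) Y]
    ring
  rw [h5]
  refine (abs_add_le _ _).trans (add_le_add ?_ h4)
  rw [abs_mul, abs_two]
  linarith

end ToeplitzTrace

open ToeplitzTrace

/-- Toeplitz trace limit behind the closed-form expression of `Σ_ML` at `ε = 0`, `d = 1`:
if `k, κ : ℤ → ℝ` are even with exponential decay, with symbols
`f(ω) = Σ k(i) cos(iω)` and `f_θ(ω) = Σ κ(i) cos(iω)`, and `inf f > 0` on `[-π,π]`,
then the Toeplitz matrices `Tₙ = (k(i-j))` are invertible and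
`(1/n) tr(Tₙ⁻¹ T'ₙ Tₙ⁻¹ T'ₙ) → (1/2π) ∫_{-π}^{π} f_θ²/f²`. -/
theorem stmt16 (k κ : ℤ → ℝ)
    (hke : ∀ i, k (-i) = k i) (hκe : ∀ i, κ (-i) = κ i)
    (C a : ℝ) (ha : 0 < a)
    (hk : ∀ i : ℤ, |k i| ≤ C * Real.exp (-a * |(i : ℝ)|))
    (hκ : ∀ i : ℤ, |κ i| ≤ C * Real.exp (-a * |(i : ℝ)|))
    (hfpos : ∃ c : ℝ, 0 < c ∧ ∀ ω ∈ Set.Icc (-π) π,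
      c ≤ ∑' i : ℤ, k i * Real.cos (i * ω)) :
    (∀ n : ℕ, IsUnit (Matrix.of fun i j : Fin n => k ((i : ℤ) - (j : ℤ)))) ∧
    Tendsto (fun n : ℕ => (1 / (n : ℝ)) *
        ((Matrix.of fun i j : Fin n => k ((i : ℤ) - (j : ℤ)))⁻¹
          * (Matrix.of fun i j : Fin n => κ ((i : ℤ) - (j : ℤ)))
          * (Matrix.of fun i j : Fin n => k ((i : ℤ) - (j : ℤ)))⁻¹
          * (Matrix.of fun i j : Fin n => κ ((i : ℤ) - (j : ℤ)))).trace)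
      atTop
      (nhds ((1 / (2 * π)) * ∫ ω in (-π)..π,
        (∑' i : ℤ, κ i * Real.cos (i * ω)) ^ 2
          / (∑' i : ℤ, k i * Real.cos (i * ω)) ^ 2)) := by
  obtain ⟨c, hc0, hc⟩ := hfpos
  have hC : 0 ≤ C := by simpa using (abs_nonneg _).trans (hk 0)
  have hks := summable_abs_of_decay ha hk
  have hκs := summable_abs_of_decay ha hκ
  have hfl : ∀ ω, c ≤ symb k ω := symb_lower hc
  have hf0 : ∀ ω, symb k ω ≠ 0 := fun ω => (hc0.trans_le (hfl ω)).ne'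
  have hlow : ∀ n, ∀ x : Fin n → ℝ,
      c ^ 2 * ∑ i, x i ^ 2 ≤ ∑ i, (toep k n).mulVec x i ^ 2 := fun n =>
    sq_lower_of_quad hc0 fun x => quad_lower hke hks hfl x
  have hunit : ∀ n, IsUnit (toep k n) := fun n => isUnit_of_sq_lower hc0 (hlow n)
  refine ⟨hunit, ?_⟩
  set h : ℝ → ℝ := fun ω => symb κ ω / symb k ω with hh
  have hcont : Continuous h := (continuous_symb hκs).div (continuous_symb hks) hf0
  have hfh : ∀ ω, symb k ω * h ω = symb κ ω := fun ω => mul_div_cancel₀ _ (hf0 ω)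
  have heven : ∀ ω, h (-ω) = h ω := fun ω => by simp only [hh, symb_neg]
  have hA : ∀ ω, |h ω| ≤ (∑' i, |κ i|) / c := by
    intro ω
    rw [hh, abs_div]
    have h1 : |symb κ ω| ≤ ∑' i, |κ i| := by
      rw [← Real.norm_eq_abs]
      refine tsum_of_norm_bounded hκs.hasSum fun i => ?_
      rw [Real.norm_eq_abs, abs_mul]
      exact mul_le_of_le_one_right (abs_nonneg _) (Real.abs_cos_le_one _)
    exact div_le_div₀ (tsum_nonneg fun _ => abs_nonneg _) h1 hc0 ((hfl ω).trans (le_abs_self _))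
  obtain ⟨K, hK0, hK⟩ := frob_bound hke hκe hC ha hk hκs hcont hfh hA
  have hpars := parseval_even hcont heven
  set S := (2 * π)⁻¹ * ∫ ω in (-π)..π, h ω ^ 2 with hS
  have hlim : (1 / (2 * π)) * ∫ ω in (-π)..π, (∑' i : ℤ, κ i * Real.cos (i * ω)) ^ 2
      / (∑' i : ℤ, k i * Real.cos (i * ω)) ^ 2 = S := by
    rw [hS, one_div]
    simp only [hh, symb, div_pow]
  rw [hlim]
  have hces := cesaro_toeplitz hpars
  set B : ∀ n, Matrix (Fin n) (Fin n) ℝ := fun n => toep (coef h) n with hB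
  have hcoef : ∀ m, coef h (-m) = coef h m := fun m => by simp [coef]
  -- `T(h)` is symmetric, so `tr T(h)²` is a sum of squares.
  have htrB : ∀ n, (B n * B n).trace
      = ∑ i : Fin n, ∑ j : Fin n, coef h ((i : ℤ) - (j : ℤ)) ^ 2 := by
    intro n
    simp only [Matrix.trace, Matrix.diag, Matrix.mul_apply, hB, toep, Matrix.of_apply]
    refine Finset.sum_congr rfl fun i _ => Finset.sum_congr rfl fun j _ => ?_
    rw [← hcoef ((j : ℤ) - i), neg_sub, sq]
  have hBn : ∀ n, ∑ i, ∑ j, B n i j ^ 2 ≤ n * S := by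
    intro n
    have : ∀ i : Fin n, ∑ j, B n i j ^ 2 ≤ S := by
      intro i
      have e := ((Equiv.subLeft (i : ℤ)).hasSum_iff.2 hpars)
      have := sum_le_hasSum ((Finset.range n).map Nat.castEmbedding)
        (fun _ _ => sq_nonneg _) e
      rw [Finset.sum_map, Finset.sum_range] at this
      exact this
    calc _ ≤ ∑ i : Fin n, S := Finset.sum_le_sum fun i _ => this i
      _ = n * S := by simp
  have hS0 : 0 ≤ S := hpars.nonneg fun _ => sq_nonneg _
  have hD : ∀ n, ∑ i, ∑ j, ((toep k n)⁻¹ * toep κ n - B n) i j ^ 2 ≤ K / c ^ 2 := by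
    intro n
    rw [le_div_iff₀ (by positivity), mul_comm]
    -- `T(f) (T(f)⁻¹ T(g) - T(h)) = T(g) - T(f) T(h)`
    refine (frob_lower (hlow n) _).trans (le_trans (le_of_eq ?_) (hK n))
    have hdet : IsUnit (toep k n).det := (Matrix.isUnit_iff_isUnit_det _).1 (hunit n)
    rw [Matrix.mul_sub, Matrix.mul_nonsing_inv_cancel_left _ _ hdet]
  set d := K / c ^ 2 with hd
  have hdiff : Tendsto (fun n : ℕ => (1 / (n : ℝ)) *
      ((((toep k n)⁻¹ * toep κ n) * ((toep k n)⁻¹ * toep κ n)).trace - (B n * B n).trace))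
      atTop (nhds 0) := by
    have hz : Tendsto (fun n : ℕ => 2 * √(S * d) * (√(n : ℝ))⁻¹ + d * (n : ℝ)⁻¹) atTop
        (nhds 0) := by
      have h1 : Tendsto (fun n : ℕ => (√(n : ℝ))⁻¹) atTop (nhds 0) :=
        (Real.tendsto_sqrt_atTop.comp tendsto_natCast_atTop_atTop).inv_tendsto_atTop
      have h2 : Tendsto (fun n : ℕ => (n : ℝ)⁻¹) atTop (nhds 0) :=
        tendsto_inv_atTop_nhds_zero_nat
      simpa using (h1.const_mul (2 * √(S * d))).add (h2.const_mul d)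
    refine squeeze_zero_norm (fun n => ?_) hz
    have h1 := trace_sq_sub_le _ _ (hBn n) (hD n)
    rw [Real.norm_eq_abs, abs_mul, abs_of_nonneg (by positivity : (0 : ℝ) ≤ 1 / n), one_div]
    refine (mul_le_mul_of_nonneg_left h1 (by positivity)).trans (le_of_eq ?_)
    rw [mul_assoc (n : ℝ), Real.sqrt_mul n.cast_nonneg, ← Real.sqrt_div_self]
    ring
  have hfin := hdiff.add hces
  rw [zero_add] at hfin
  refine hfin.congr fun n => ?_
  rw [← htrB, ← mul_add, sub_add_cancel, ← Matrix.mul_assoc]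
  rfl
end

section
/- Let n ≥ 2 and let R be a real symmetric positive definite n × n matrix. Fix i ∈ {1, …, n}. Let R_{−i} be the (n−1) × (n−1) matrix obtained from R by deleting row i and column i, let r_i ∈ ℝ^{n−1} be the i-th column of R with its i-th entry removed, and for y ∈ ℝ^n let y_{−i} ∈ ℝ^{n−1} be y with its i-th entry removed. Then (R⁻¹)_{ii} > 0, R_{−i} is invertible, and for every y ∈ ℝ^n: y_i − r_iᵀ R_{−i}⁻¹ y_{−i} = (R⁻¹ y)_i / (R⁻¹)_{ii}. -/
/-!
Put `z = R⁻¹ y`, so that `y = R z`. Splitting off the `i`-th coordinate of `z` gives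
`y₋ᵢ = R₋ᵢ z₋ᵢ + zᵢ rᵢ` and, by symmetry of `R`, `yᵢ = Rᵢᵢ zᵢ + rᵢᵀ z₋ᵢ`. Hence the prediction
error at `i` is `s zᵢ`, where `s = Rᵢᵢ - rᵢᵀ R₋ᵢ⁻¹ rᵢ` is the Schur complement
(`loo_error_mulVec`). Taking for `y` the `i`-th basis vector, whose error is `1`, shows
`s (R⁻¹)ᵢᵢ = 1`.
-/

open Matrix

/-- The Leave-One-Out error of `R z` at `i` is the Schur complement of `R₋ᵢ` in `R` times `zᵢ`. -/
theorem loo_error_mulVec {n : ℕ} (R : Matrix (Fin (n + 1)) (Fin (n + 1)) ℝ)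
    (hsymm : ∀ a b, R a b = R b a) (i : Fin (n + 1))
    (hu : IsUnit (R.submatrix i.succAbove i.succAbove)) (z : Fin (n + 1) → ℝ) :
    (R *ᵥ z) i - (fun j : Fin n => R (i.succAbove j) i) ⬝ᵥ
        ((R.submatrix i.succAbove i.succAbove)⁻¹ *ᵥ fun j : Fin n => (R *ᵥ z) (i.succAbove j))
      = (R i i - (fun j : Fin n => R (i.succAbove j) i) ⬝ᵥ
        ((R.submatrix i.succAbove i.succAbove)⁻¹ *ᵥ fun j : Fin n => R (i.succAbove j) i))
        * z i := by
  set A := R.submatrix i.succAbove i.succAbove with hA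
  set r : Fin n → ℝ := fun j => R (i.succAbove j) i with hr
  set w : Fin n → ℝ := fun j => z (i.succAbove j) with hw
  have hrest : (fun j : Fin n => (R *ᵥ z) (i.succAbove j)) = z i • r + A *ᵥ w := by
    ext j
    simp only [mulVec, dotProduct, Pi.add_apply, Pi.smul_apply, smul_eq_mul,
      Fin.sum_univ_succAbove _ i, hA, hr, hw, submatrix_apply]
    ring
  have hi : (R *ᵥ z) i = R i i * z i + r ⬝ᵥ w := by
    simp only [mulVec, dotProduct, Fin.sum_univ_succAbove _ i, hr, hw]
    simp only [hsymm i (i.succAbove _)]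
  have hinv : A⁻¹ *ᵥ (A *ᵥ w) = w := by
    rw [mulVec_mulVec, nonsing_inv_mul _ ((isUnit_iff_isUnit_det A).1 hu), one_mulVec]
  rw [hrest, hi, mulVec_add, mulVec_smul, hinv, dotProduct_add, dotProduct_smul, smul_eq_mul]
  ring

/-- Virtual Leave-One-Out formula: for a real symmetric positive definite matrix `R` of
size `n + 1 ≥ 2` and an index `i`, with `R₋ᵢ` the matrix with row and column `i`
deleted and `rᵢ` the `i`-th column with entry `i` removed, one has `(R⁻¹)ᵢᵢ > 0`,
`R₋ᵢ` is invertible, and for every `y`,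
`yᵢ - rᵢᵀ R₋ᵢ⁻¹ y₋ᵢ = (R⁻¹ y)ᵢ / (R⁻¹)ᵢᵢ`. -/
theorem stmt17 (n : ℕ) (hn : 1 ≤ n)
    (R : Matrix (Fin (n + 1)) (Fin (n + 1)) ℝ) (hR : R.PosDef) (i : Fin (n + 1)) :
    0 < R⁻¹ i i ∧
    IsUnit (R.submatrix i.succAbove i.succAbove) ∧
    ∀ y : Fin (n + 1) → ℝ,
      y i - (fun j : Fin n => R (i.succAbove j) i) ⬝ᵥ
          ((R.submatrix i.succAbove i.succAbove)⁻¹ *ᵥ fun j : Fin n => y (i.succAbove j))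
        = (R⁻¹ *ᵥ y) i / (R⁻¹ i i) := by
  have hpos : 0 < R⁻¹ i i := hR.inv.diag_pos
  have hu : IsUnit (R.submatrix i.succAbove i.succAbove) :=
    (hR.submatrix Fin.succAbove_right_injective).isUnit
  refine ⟨hpos, hu, fun y => ?_⟩
  have hsymm : ∀ a b, R a b = R b a := fun a b => by simpa using (hR.isHermitian.apply a b).symm
  have key := loo_error_mulVec R hsymm i hu
  have hRR : ∀ v, R *ᵥ (R⁻¹ *ᵥ v) = v := fun v => by
    rw [mulVec_mulVec, mul_nonsing_inv _ ((isUnit_iff_isUnit_det R).1 hR.isUnit), one_mulVec]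
  have hy := key (R⁻¹ *ᵥ y)
  -- The `i`-th basis vector has value `1` at `i` and vanishes elsewhere, so its error is `1`.
  have he := key (R⁻¹ *ᵥ Pi.single i 1)
  rw [hRR] at hy he
  have h0 : (fun j : Fin n => (Pi.single i 1 : Fin (n + 1) → ℝ) (i.succAbove j)) = 0 := by
    ext j
    simp [Fin.succAbove_ne]
  rw [h0] at he
  simp only [mulVec_zero, dotProduct_zero, sub_zero, Pi.single_eq_same, mulVec_single_one,
    col_apply] at he
  rw [hy, eq_div_iff hpos.ne', mul_right_comm, ← he, one_mul]
end

section
/- Let n ≥ 2 and let R be a real symmetric positive definite n × n matrix. For each i ∈ {1, …, n}, let R_{−i} be R with row i and column i deleted, r_i ∈ ℝ^{n−1} the i-th column of R with entry i removed, and y_{−i} ∈ ℝ^{n−1} the vector y with entry i removed. Let D = diag(R⁻¹) be the diagonal matrix whose i-th diagonal entry is (R⁻¹)_{ii}. Then for every y ∈ ℝ^n: Σ_{i=1}^n (y_i − r_iᵀ R_{−i}⁻¹ y_{−i})² = yᵀ R⁻¹ D⁻² R⁻¹ y. -/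
/-!
Put `z = R⁻¹ y` and fix `i`. Splitting off the `i`-th coordinate in `y = R z` gives
`y₋ᵢ = R₋ᵢ z₋ᵢ + zᵢ rᵢ` and `yᵢ = Rᵢᵢ zᵢ + rᵢᵀ z₋ᵢ`, so the `i`-th Leave-One-Out error is
`zᵢ sᵢ`, where `sᵢ = Rᵢᵢ - rᵢᵀ R₋ᵢ⁻¹ rᵢ` is the Schur complement (`loo_mulVec`). For `y = eᵢ` the
error is `1` and `zᵢ = (R⁻¹)ᵢᵢ`, hence `sᵢ = 1 / (R⁻¹)ᵢᵢ`. Every error is therefore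
`(R⁻¹ y)ᵢ / (R⁻¹)ᵢᵢ` (`loo_eq_div`), and the sum of squares is `zᵀ D⁻² z`.
-/

open Matrix

/-- The Leave-One-Out error of `R z` at `i` is `zᵢ` times the Schur complement of `R₋ᵢ` in `R`. -/
lemma loo_mulVec {n : ℕ} (R : Matrix (Fin (n + 1)) (Fin (n + 1)) ℝ) (hR : R.PosDef)
    (i : Fin (n + 1)) (z : Fin (n + 1) → ℝ) :
    (R *ᵥ z) i - (fun j : Fin n => R (i.succAbove j) i) ⬝ᵥ
          ((R.submatrix i.succAbove i.succAbove)⁻¹ *ᵥ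
            fun j : Fin n => (R *ᵥ z) (i.succAbove j))
      = z i * (R i i - (fun j : Fin n => R (i.succAbove j) i) ⬝ᵥ
          ((R.submatrix i.succAbove i.succAbove)⁻¹ *ᵥ
            fun j : Fin n => R (i.succAbove j) i)) := by
  have hS : (R.submatrix i.succAbove i.succAbove).PosDef :=
    hR.submatrix Fin.succAbove_right_injective
  have hdet : IsUnit (R.submatrix i.succAbove i.succAbove).det := hS.det_pos.ne'.isUnit
  have hsym : ∀ a b, R a b = R b a := fun a b => by simpa using hR.isHermitian.apply b a
  have h1 : (fun j : Fin n => (R *ᵥ z) (i.succAbove j))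
      = R.submatrix i.succAbove i.succAbove *ᵥ (fun j => z (i.succAbove j))
        + z i • (fun j : Fin n => R (i.succAbove j) i) := by
    funext j
    simp only [mulVec, dotProduct, Fin.sum_univ_succAbove _ i, Pi.add_apply, Pi.smul_apply,
      submatrix_apply, smul_eq_mul]
    ring
  have h2 : (R *ᵥ z) i = R i i * z i
      + (fun j : Fin n => R (i.succAbove j) i) ⬝ᵥ (fun j => z (i.succAbove j)) := by
    simp only [mulVec, dotProduct, Fin.sum_univ_succAbove _ i, hsym i]
  rw [h1, h2, mulVec_add, mulVec_mulVec, nonsing_inv_mul _ hdet, one_mulVec, mulVec_smul,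
    dotProduct_add, dotProduct_smul, smul_eq_mul]
  ring

/-- Virtual Leave-One-Out formula for a single prediction error. -/
lemma loo_eq_div {n : ℕ} (R : Matrix (Fin (n + 1)) (Fin (n + 1)) ℝ) (hR : R.PosDef)
    (i : Fin (n + 1)) (y : Fin (n + 1) → ℝ) :
    y i - (fun j : Fin n => R (i.succAbove j) i) ⬝ᵥ
          ((R.submatrix i.succAbove i.succAbove)⁻¹ *ᵥ
            fun j : Fin n => y (i.succAbove j))
      = (R⁻¹ *ᵥ y) i / R⁻¹ i i := by
  have hdet : IsUnit R.det := hR.det_pos.ne'.isUnit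
  have key : ∀ w : Fin (n + 1) → ℝ, R *ᵥ (R⁻¹ *ᵥ w) = w := fun w => by
    rw [mulVec_mulVec, mul_nonsing_inv _ hdet, one_mulVec]
  have hy := loo_mulVec R hR i (R⁻¹ *ᵥ y)
  have he := loo_mulVec R hR i (R⁻¹ *ᵥ Pi.single i 1)
  rw [key] at hy he
  have h0 : (fun j : Fin n => (Pi.single i 1 : Fin (n + 1) → ℝ) (i.succAbove j)) = 0 := by
    funext j
    simp [Fin.succAbove_ne]
  rw [h0, mulVec_zero, dotProduct_zero, sub_zero, Pi.single_eq_same, mulVec_single_one,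
    col_apply] at he
  rw [hy, eq_div_iff hR.inv.diag_pos.ne', mul_assoc, mul_comm _ (R⁻¹ i i), ← he, mul_one]

/-- Virtual Leave-One-Out identity for the Cross Validation criterion: for a real
symmetric positive definite matrix `R` of size `n + 1 ≥ 2`, with `R₋ᵢ`, `rᵢ`, `y₋ᵢ`
as in the Leave-One-Out formula and `D = diag(R⁻¹)`, one has for every `y`:
`Σᵢ (yᵢ - rᵢᵀ R₋ᵢ⁻¹ y₋ᵢ)² = yᵀ R⁻¹ D⁻² R⁻¹ y`. -/
theorem stmt18 (n : ℕ) (hn : 1 ≤ n)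
    (R : Matrix (Fin (n + 1)) (Fin (n + 1)) ℝ) (hR : R.PosDef)
    (y : Fin (n + 1) → ℝ) :
    ∑ i : Fin (n + 1),
        (y i - (fun j : Fin n => R (i.succAbove j) i) ⬝ᵥ
          ((R.submatrix i.succAbove i.succAbove)⁻¹ *ᵥ
            fun j : Fin n => y (i.succAbove j))) ^ 2
      = y ⬝ᵥ ((R⁻¹ * ((Matrix.diagonal fun k => R⁻¹ k k) ^ 2)⁻¹ * R⁻¹) *ᵥ y) := by
  have hinv : ((Matrix.diagonal fun k => R⁻¹ k k) ^ 2)⁻¹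
      = Matrix.diagonal fun k => ((R⁻¹ k k) ^ 2)⁻¹ := by
    apply inv_eq_right_inv
    rw [diagonal_pow, diagonal_mul_diagonal, ← diagonal_one]
    congr 1
    funext k
    exact mul_inv_cancel₀ (pow_ne_zero 2 hR.inv.diag_pos.ne')
  have hT : R⁻¹ᵀ = R⁻¹ := by
    simpa [IsHermitian, conjTranspose_eq_transpose_of_trivial] using hR.inv.isHermitian
  have hvec : y ᵥ* R⁻¹ = R⁻¹ *ᵥ y := by
    rw [← mulVec_transpose, hT]
  rw [hinv, ← mulVec_mulVec, ← mulVec_mulVec, dotProduct_mulVec, hvec, dotProduct]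
  refine Finset.sum_congr rfl fun i _ => ?_
  rw [loo_eq_div R hR i y, mulVec_diagonal, div_pow]
  ring
end
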